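/- Let n ≥ 4, 1 ≤ q < ∞ and 1 ≤ p < ∞. There exists a constant C (depending only on n, p, q) such that ‖A_*[f₁,…,f_n]‖_{ℓ^q(ℤ)} ≤ C ∏_{i=1}^n ‖f_i‖_{ℓ^p(ℤ)} for all f₁,…,f_n ∈ ℓ^p(ℤ) if and only if n ≥ 5 and p ≤ nq. -/

import Mathlib

open scoped BigOperators ENNReal NNReal
open MeasureTheory Finset

noncomputable section

/-- `sphereCount n lam` is the number of lattice points `x ∈ ℤ^n` with
`x₁² + ⋯ + x_n² = lam`. -/
def sphereCount (n lam : ℕ) : ℕ :=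
  {x : Fin n → ℤ | ∑ i, (x i) ^ 2 = (lam : ℤ)}.ncard

/-- The multilinear spherical average
`A_lam[f₁,…,f_n](y) = (1/r_n(lam)) ∑_{|x|² = lam} f₁(y-x₁)⋯f_n(y-x_n)`. -/
def mulAvg (n lam : ℕ) (f : Fin n → ℤ → ℂ) (y : ℤ) : ℂ :=
  (sphereCount n lam : ℂ)⁻¹ *
    ∑ᶠ x ∈ {x : Fin n → ℤ | ∑ i, (x i) ^ 2 = (lam : ℤ)}, ∏ i, f i (y - x i)

/-- The maximal function `A_*[f₁,…,f_n](y) = sup_{lam ≥ 1} |A_lam[f₁,…,f_n](y)|`. -/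
def maxFn (n : ℕ) (f : Fin n → ℤ → ℂ) (y : ℤ) : ℝ≥0∞ :=
  ⨆ (lam : ℕ) (_ : 1 ≤ lam), (‖mulAvg n lam f y‖₊ : ℝ≥0∞)

/-- The `ℓ^p(ℤ)` norm of a complex-valued function, valued in `ℝ≥0∞`. -/
def lpNorm (p : ℝ) (g : ℤ → ℂ) : ℝ≥0∞ :=
  (∑' x : ℤ, (‖g x‖₊ : ℝ≥0∞) ^ p) ^ (1 / p)

/-- The `ℓ^q(ℤ)` norm of an `ℝ≥0∞`-valued function. -/
def lqNormE (q : ℝ) (g : ℤ → ℝ≥0∞) : ℝ≥0∞ :=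
  (∑' x : ℤ, g x ^ q) ^ (1 / q)

/-!
For `n ≥ 5`, the heart of the matter is a bound for the average over the sphere `|x|² = lam` of
`g₁(x_i) g₂(x_j)`, for two fixed coordinates `i ≠ j`, by the product of the local `ℓ^{3/2}` means
of `g₁` and `g₂` at scale `√lam`. By the circle method the sum over the sphere is an integral of two
Weyl sums against the remaining `n - 2 ≥ 3` theta functions, whose product is dominated by arcs
around all fractions of denominator at most `√lam`. Opening the squares of the Weyl sums leaves sums
over pairs `x² ≡ y²` modulo `q`, which are divisor sums of `x² - y² = (x - y)(x + y)` controlled by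
moments of the divisor function. Normalizing needs `r_n(lam) ≳ lam^{n/2 - 1}`, which follows from
Jacobi's formula for sums of four odd squares, proved by Liouville's method. Hölder's inequality
along a permutation without fixed points passes from pairs of coordinates to the product of all `n`
functions, Jensen's inequality inserts the exponent `q`, and the Hardy–Littlewood maximal theorem at
the exponent `4/3` yields the case `p = nq`. Smaller `p` follow because the `ℓ^p` norms decrease
in `p`.

Conversely, for `n = 4` the number of points on the spheres of radius `2^k` stays bounded, while
`x = (2^{k-1}, …, 2^{k-1})` is always one of them, so the maximal function of the unit mass at `0`
does not decay along the powers of `2`. The indicator of a long interval forces `p ≤ nq`, since the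
sphere of radius `1` moves it only near the endpoints.
-/

namespace SphericalMaximal

/-! ### The number of points on a sphere -/

section Liouville

lemma abs_le_of_sq_le {s N : ℤ} (h : s ^ 2 ≤ N) : |s| ≤ N :=
  (Int.abs_eq_natAbs s ▸ Int.natAbs_le_self_sq s).trans h

/-- The finite set of triples `(s, y, z)` with `s² + 4yz = M` and `y, z > 0`, on which Liouville's
and Zagier's elementary arguments about sums of squares act. -/
def zagierTriples (M : ℤ) : Finset (ℤ × ℤ × ℤ) :=
  {v ∈ Icc (-M) M ×ˢ Icc 1 M ×ˢ Icc 1 M | v.1 ^ 2 + 4 * v.2.1 * v.2.2 = M}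

lemma mem_zagierTriples {M s y z : ℤ} :
    (s, y, z) ∈ zagierTriples M ↔ s ^ 2 + 4 * y * z = M ∧ 0 < y ∧ 0 < z := by
  simp only [zagierTriples, mem_filter, mem_product, mem_Icc]
  refine ⟨fun ⟨⟨_, ⟨_, _⟩, _, _⟩, h⟩ ↦ ⟨h, by lia, by lia⟩, fun ⟨h, hy, hz⟩ ↦ ?_⟩
  have hyz : 0 < y * z := mul_pos hy hz
  have hs : |s| ≤ M := abs_le_of_sq_le (by nlinarith)
  exact ⟨⟨abs_le.mp hs, ⟨by lia, by nlinarith⟩, by lia, by nlinarith⟩, h⟩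

lemma sum_zagierTriples_swap (M : ℤ) (g : ℤ → ℤ → ℤ → ℤ) :
    ∑ v ∈ zagierTriples M, g v.1 v.2.1 v.2.2 = ∑ v ∈ zagierTriples M, g v.1 v.2.2 v.2.1 := by
  refine sum_equiv ((Equiv.refl ℤ).prodCongr (Equiv.prodComm ℤ ℤ)) ?_ fun _ _ ↦ rfl
  rintro ⟨s, y, z⟩
  simp only [Equiv.prodCongr_apply, Equiv.coe_refl, Equiv.coe_prodComm, Prod.map, id_eq,
    Prod.swap, mem_zagierTriples]
  grind

lemma sum_zagierTriples_neg (M : ℤ) (g : ℤ → ℤ → ℤ → ℤ) :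
    ∑ v ∈ zagierTriples M, g v.1 v.2.1 v.2.2 = ∑ v ∈ zagierTriples M, g (-v.1) v.2.1 v.2.2 := by
  refine sum_equiv ((Equiv.neg ℤ).prodCongr (Equiv.refl (ℤ × ℤ))) ?_ fun _ _ ↦ by simp
  rintro ⟨s, y, z⟩
  simp [mem_zagierTriples]

/-- The half `s < y - z` of `zagierTriples M`. When `M` is not a square no triple has
`s = y - z`, so the other half is `y - z < s`. -/
def zagierLower (M : ℤ) : Finset (ℤ × ℤ × ℤ) :=
  {v ∈ zagierTriples M | v.1 < v.2.1 - v.2.2}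

lemma mem_zagierLower {M s y z : ℤ} :
    (s, y, z) ∈ zagierLower M ↔ s ^ 2 + 4 * y * z = M ∧ 0 < y ∧ 0 < z ∧ s < y - z := by
  simp only [zagierLower, mem_filter, mem_zagierTriples, and_assoc]

lemma mem_zagierTriples_not_lower {M s y z : ℤ} (hM : ¬ IsSquare M) :
    (s, y, z) ∈ {v ∈ zagierTriples M | ¬ v.1 < v.2.1 - v.2.2} ↔
      s ^ 2 + 4 * y * z = M ∧ 0 < y ∧ 0 < z ∧ y - z < s := by
  have hne : s ^ 2 + 4 * y * z = M → s ≠ y - z := fun h hs ↦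
    hM ⟨y + z, by rw [← h, hs]; ring⟩
  simp only [mem_filter, mem_zagierTriples, and_assoc]
  grind

lemma sum_zagierTriples_reflect {M : ℤ} (hM : ¬ IsSquare M) (g : ℤ → ℤ → ℤ → ℤ) :
    ∑ v ∈ zagierTriples M with ¬ v.1 < v.2.1 - v.2.2, g v.1 v.2.1 v.2.2 =
      ∑ v ∈ zagierLower M, g (-v.1) v.2.2 v.2.1 := by
  refine sum_equiv ((Equiv.neg ℤ).prodCongr (Equiv.prodComm ℤ ℤ)) ?_ fun _ _ ↦ by simp
  rintro ⟨s, y, z⟩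
  rw [mem_zagierTriples_not_lower hM]
  simp only [Equiv.prodCongr_apply, Equiv.neg_apply, Equiv.coe_prodComm, Prod.map, Prod.swap,
    mem_zagierLower]
  grind

/-- The linear automorphism of `s² + 4yz` which maps the half `y - z < s` of `zagierTriples M`
onto the half `s < y - z`. -/
def zagierShear : ℤ × ℤ × ℤ ≃ ℤ × ℤ × ℤ where
  toFun v := (v.1 - 2 * v.2.1, v.2.2 + v.1 - v.2.1, v.2.1)
  invFun v := (v.1 + 2 * v.2.2, v.2.2, v.2.1 - v.1 - v.2.2)
  left_inv v := by ext <;> simp only <;> ring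
  right_inv v := by ext <;> simp only <;> ring

lemma sum_zagierTriples_shear {M : ℤ} (hM : ¬ IsSquare M) (g : ℤ → ℤ → ℤ → ℤ) :
    ∑ v ∈ zagierTriples M with ¬ v.1 < v.2.1 - v.2.2, g v.1 v.2.1 v.2.2 =
      ∑ v ∈ zagierLower M, g (v.1 + 2 * v.2.2) v.2.2 (v.2.1 - v.1 - v.2.2) := by
  refine sum_equiv zagierShear ?_ fun v _ ↦ ?_
  · rintro ⟨s, y, z⟩
    rw [mem_zagierTriples_not_lower hM]
    simp only [zagierShear, Equiv.coe_fn_mk, mem_zagierLower]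
    grind
  · simp only [zagierShear, Equiv.coe_fn_mk]
    congr 1 <;> ring

lemma sum_zagierTriples_eq_sum_lower {M : ℤ} (hM : ¬ IsSquare M) (g : ℤ → ℤ → ℤ → ℤ) :
    ∑ v ∈ zagierTriples M, g v.1 v.2.1 v.2.2 =
      ∑ v ∈ zagierLower M, (g v.1 v.2.1 v.2.2 + g (-v.1) v.2.2 v.2.1) := by
  rw [sum_add_distrib, ← sum_zagierTriples_reflect hM, zagierLower,
    sum_filter_add_sum_filter_not]

lemma sum_zagierLower_odd {M : ℤ} (hM : ¬ IsSquare M) :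
    ∑ v ∈ zagierLower M, v.1 * (v.2.1 ^ 2 - v.2.2 ^ 2) = 0 := by
  have hneg := sum_zagierTriples_neg M fun s y z ↦ s * (y ^ 2 - z ^ 2)
  simp only [neg_mul, sum_neg_distrib] at hneg
  have hfold := sum_zagierTriples_eq_sum_lower hM fun s y z ↦ s * (y ^ 2 - z ^ 2)
  have hpair (v : ℤ × ℤ × ℤ) : v.1 * (v.2.1 ^ 2 - v.2.2 ^ 2) +
      -v.1 * (v.2.2 ^ 2 - v.2.1 ^ 2) = 2 * (v.1 * (v.2.1 ^ 2 - v.2.2 ^ 2)) := by ring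
  simp only [hpair, ← mul_sum] at hfold
  lia

/- Reflection and shear both carry the upper half onto the lower half. Comparing them on the
cubic form `-z³ - y²z - sz²` gives the identity, up to a multiple of an odd form. -/
lemma sum_zagierTriples_mul_add {M : ℤ} (hM : ¬ IsSquare M) :
    ∑ v ∈ zagierTriples M, (v.2.1 * v.2.2 - v.1 ^ 2) * (v.2.1 + v.2.2) = 0 := by
  let cubic (s y z : ℤ) : ℤ := -z ^ 3 - y ^ 2 * z - s * z ^ 2
  have hcompare : ∑ v ∈ zagierLower M, (cubic (v.1 + 2 * v.2.2) v.2.2 (v.2.1 - v.1 - v.2.2) -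
      cubic (-v.1) v.2.2 v.2.1) = 0 := by
    rw [sum_sub_distrib, ← sum_zagierTriples_shear hM, ← sum_zagierTriples_reflect hM, sub_self]
  have hlower : ∑ v ∈ zagierLower M, (v.2.1 * v.2.2 - v.1 ^ 2) * (v.2.1 + v.2.2) = 0 := by
    rw [← sub_eq_zero.mpr (hcompare.trans (sum_zagierLower_odd hM).symm), ← sum_sub_distrib]
    exact sum_congr rfl fun v _ ↦ by ring
  have hpair (v : ℤ × ℤ × ℤ) : (v.2.1 * v.2.2 - v.1 ^ 2) * (v.2.1 + v.2.2) +
      (v.2.2 * v.2.1 - (-v.1) ^ 2) * (v.2.2 + v.2.1) =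
      2 * ((v.2.1 * v.2.2 - v.1 ^ 2) * (v.2.1 + v.2.2)) := by ring
  have hfold := sum_zagierTriples_eq_sum_lower hM fun s y z ↦ (y * z - s ^ 2) * (y + z)
  simp only [hpair, ← mul_sum, hlower, mul_zero] at hfold
  exact hfold

/-- The divisor sum `σ(N / 4)` for a positive multiple `N` of `4`, and `0` for all other `N`. -/
def quarterSigma (N : ℤ) : ℤ :=
  ∑ v ∈ Icc 1 N ×ˢ Icc 1 N with 4 * v.1 * v.2 = N, v.1

lemma quarterSigma_of_nonpos {N : ℤ} (hN : N ≤ 0) : quarterSigma N = 0 := by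
  simp [quarterSigma, Icc_eq_empty (show ¬ 1 ≤ N by lia)]

lemma quarterSigma_of_not_dvd {N : ℤ} (hN : ¬ 4 ∣ N) : quarterSigma N = 0 := by
  rw [quarterSigma, filter_false_of_mem, sum_empty]
  exact fun v _ hv ↦ hN ⟨v.1 * v.2, by rw [← hv, mul_assoc]⟩

lemma quarterSigma_four : quarterSigma 4 = 1 := by decide +kernel

lemma le_quarterSigma {m : ℤ} (hm : 1 ≤ m) : m ≤ quarterSigma (4 * m) := by
  have hmem : (m, (1 : ℤ)) ∈ ({v ∈ Icc 1 (4 * m) ×ˢ Icc 1 (4 * m) |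
      4 * v.1 * v.2 = 4 * m} : Finset (ℤ × ℤ)) := by
    simp only [mem_filter, mem_product, mem_Icc]
    lia
  refine single_le_sum (f := Prod.fst) (fun v hv ↦ ?_) hmem
  simp only [mem_filter, mem_product, mem_Icc] at hv
  lia

lemma sum_quarterSigma_recursion {M : ℤ} (hM : ¬ IsSquare M) :
    ∑ s ∈ Icc (-M) M, (M - 5 * s ^ 2) * quarterSigma (M - s ^ 2) = 0 := by
  have hfibre : ∑ s ∈ Icc (-M) M, (M - 5 * s ^ 2) * quarterSigma (M - s ^ 2) =
      ∑ v ∈ zagierTriples M, (M - 5 * v.1 ^ 2) * v.2.1 := by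
    simp only [quarterSigma, mul_sum]
    rw [sum_sigma']
    refine sum_equiv (Equiv.sigmaEquivProd ℤ (ℤ × ℤ)) ?_ fun _ _ ↦ rfl
    rintro ⟨s, y, z⟩
    simp only [mem_sigma, mem_filter, mem_product, mem_Icc, Equiv.sigmaEquivProd,
      Equiv.coe_fn_mk, mem_zagierTriples]
    refine ⟨fun ⟨_, ⟨⟨_, _⟩, _, _⟩, _⟩ ↦ ⟨by lia, by lia, by lia⟩, fun ⟨_, hy, hz⟩ ↦ ?_⟩
    have hyz : 0 < y * z := mul_pos hy hz
    have hs : |s| ≤ M := abs_le_of_sq_le (by nlinarith)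
    exact ⟨abs_le.mp hs, ⟨⟨by lia, by nlinarith⟩, by lia, by nlinarith⟩, by lia⟩
  have hcongr : ∑ v ∈ zagierTriples M, (M - 5 * v.1 ^ 2) * v.2.1 =
      4 * ∑ v ∈ zagierTriples M, (v.2.1 * v.2.2 - v.1 ^ 2) * v.2.1 := by
    rw [mul_sum]
    refine sum_congr rfl fun ⟨s, y, z⟩ hv ↦ ?_
    rw [← (mem_zagierTriples.mp hv).1]
    ring
  have hswap := sum_zagierTriples_swap M fun s y z ↦ (y * z - s ^ 2) * y
  have hzero := sum_zagierTriples_mul_add hM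
  simp only [mul_add, sum_add_distrib] at hzero
  rw [hfibre, hcongr]
  simp only [mul_comm] at hswap hzero ⊢
  lia

end Liouville

section OddPoints

/-- The points of `ℤ^k` with all coordinates odd on the sphere `|x|² = N`. -/
def oddSphere (k : ℕ) (N : ℤ) : Finset (Fin k → ℤ) :=
  {x ∈ Fintype.piFinset fun _ ↦ Icc (-N) N | (∀ i, Odd (x i)) ∧ ∑ i, x i ^ 2 = N}

lemma sq_apply_le_sum {k : ℕ} (x : Fin k → ℤ) (i : Fin k) : x i ^ 2 ≤ ∑ j, x j ^ 2 :=
  single_le_sum (f := fun j ↦ x j ^ 2) (fun j _ ↦ sq_nonneg (x j)) (mem_univ i)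

lemma mem_oddSphere {k : ℕ} {N : ℤ} {x : Fin k → ℤ} :
    x ∈ oddSphere k N ↔ (∀ i, Odd (x i)) ∧ ∑ i, x i ^ 2 = N := by
  simp only [oddSphere, mem_filter, Fintype.mem_piFinset, mem_Icc, and_iff_right_iff_imp]
  rintro ⟨-, rfl⟩ i
  exact abs_le.mp (abs_le_of_sq_le (sq_apply_le_sum x i))

lemma oddSphere_of_nonpos {k : ℕ} [NeZero k] {N : ℤ} (hN : N ≤ 0) : oddSphere k N = ∅ := by
  refine eq_empty_of_forall_notMem fun x hx ↦ ?_
  obtain ⟨hodd, hsum⟩ := mem_oddSphere.mp hx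
  have hx0 : x 0 ≠ 0 := fun h ↦ by simpa [h] using hodd 0
  have hpos : 0 < x 0 ^ 2 := by positivity
  exact absurd (sq_apply_le_sum x 0) (by lia)

lemma sum_oddSphere_sq (k : ℕ) (M : ℤ) (i j : Fin k) :
    ∑ x ∈ oddSphere k M, x i ^ 2 = ∑ x ∈ oddSphere k M, x j ^ 2 := by
  refine sum_equiv ((Equiv.swap i j).arrowCongr (Equiv.refl ℤ)) (fun x ↦ ?_) fun x _ ↦ by simp
  have hsum : ∑ l, x (Equiv.swap i j l) ^ 2 = ∑ l, x l ^ 2 :=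
    Equiv.sum_comp (Equiv.swap i j) fun l ↦ x l ^ 2
  have hodd : (∀ l, Odd (x (Equiv.swap i j l))) ↔ ∀ l, Odd (x l) :=
    (Equiv.swap i j).forall_congr_right (q := fun l ↦ Odd (x l))
  simp only [mem_oddSphere, Equiv.arrowCongr_apply, Equiv.symm_swap, Equiv.coe_refl, id_eq,
    Function.comp_apply, hsum, hodd]

lemma sum_oddSphere_recursion (k : ℕ) (M : ℤ) :
    ∑ s ∈ Icc (-M) M with Odd s, (M - (k + 1) * s ^ 2) * (#(oddSphere k (M - s ^ 2)) : ℤ) = 0 := by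
  have hfibre : ∑ s ∈ Icc (-M) M with Odd s,
      (M - (k + 1) * s ^ 2) * (#(oddSphere k (M - s ^ 2)) : ℤ) =
      ∑ x ∈ oddSphere (k + 1) M, (M - (k + 1) * x 0 ^ 2) := by
    simp only [mul_comm _ ((#(oddSphere _ _) : ℤ)), ← nsmul_eq_mul, ← sum_const]
    rw [sum_sigma']
    refine sum_equiv ((Equiv.sigmaEquivProd ℤ (Fin k → ℤ)).trans (Fin.consEquiv fun _ ↦ ℤ)) ?_ ?_
    · rintro ⟨s, x⟩
      simp only [mem_sigma, mem_filter, mem_Icc, mem_oddSphere, Equiv.trans_apply,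
        Equiv.sigmaEquivProd, Equiv.coe_fn_mk, Fin.consEquiv, Fin.forall_fin_succ, Fin.cons_zero,
        Fin.cons_succ, Fin.sum_univ_succ]
      refine ⟨fun ⟨⟨_, hs⟩, hx, _⟩ ↦ ⟨⟨hs, hx⟩, by lia⟩, fun ⟨⟨hs, hx⟩, _⟩ ↦ ?_⟩
      have hsum : 0 ≤ ∑ i, x i ^ 2 := sum_nonneg fun i _ ↦ sq_nonneg (x i)
      exact ⟨⟨abs_le.mp (abs_le_of_sq_le (by lia)), hs⟩, hx, by lia⟩
    · exact fun _ _ ↦ rfl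
  have hsymm : ∑ _x ∈ oddSphere (k + 1) M, M =
      ∑ x ∈ oddSphere (k + 1) M, (k + 1) * x 0 ^ 2 := by
    rw [← mul_sum]
    calc ∑ _x ∈ oddSphere (k + 1) M, M
        = ∑ x ∈ oddSphere (k + 1) M, ∑ i, x i ^ 2 :=
          sum_congr rfl fun x hx ↦ (mem_oddSphere.mp hx).2.symm
      _ = ∑ _i : Fin (k + 1), ∑ x ∈ oddSphere (k + 1) M, x 0 ^ 2 := by
          rw [sum_comm]
          exact sum_congr rfl fun i _ ↦ sum_oddSphere_sq _ M i 0
      _ = (k + 1) * ∑ x ∈ oddSphere (k + 1) M, x 0 ^ 2 := by simp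
  rw [hfibre, sum_sub_distrib, hsymm, sub_self]

lemma sq_emod_eight_of_odd {s : ℤ} (hs : Odd s) : s ^ 2 % 8 = 1 := by
  have := Int.eight_dvd_sq_sub_one_of_odd hs
  lia

lemma nine_le_sq_of_odd {s : ℤ} (hs : Odd s) (h₁ : s ≠ 1) (h₂ : s ≠ -1) : 9 ≤ s ^ 2 := by
  obtain ⟨u, rfl⟩ := hs
  rcases lt_or_ge u 0 with hu | hu
  · nlinarith [show u ≤ -2 by lia]
  · nlinarith [show 1 ≤ u by lia]

lemma eq_zero_of_odd_recursion {D : ℤ → ℤ} (hneg : ∀ N ≤ 0, D N = 0) (hfour : D 4 = 0)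
    (hrec : ∀ M : ℤ, ¬ IsSquare M → M % 8 = 5 →
      ∑ s ∈ Icc (-M) M with Odd s, (M - 5 * s ^ 2) * D (M - s ^ 2) = 0) (k : ℕ) :
    D (8 * k + 4) = 0 := by
  induction k using Nat.strong_induction_on with
  | _ k ih =>
    rcases Nat.eq_zero_or_pos k with rfl | hk
    · simpa using hfour
    set M : ℤ := 8 * k + 5 with hM
    have hsq : ¬ IsSquare M := by
      rintro ⟨t, ht⟩
      rw [← sq] at ht
      rcases Int.even_or_odd t with ⟨u, rfl⟩ | hodd
      · have : (u + u) ^ 2 = 4 * u ^ 2 := by ring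
        lia
      · have := sq_emod_eight_of_odd hodd
        lia
    have htail (s : ℤ) (hs : Odd s) (h₁ : s ≠ 1) (h₂ : s ≠ -1) : D (M - s ^ 2) = 0 := by
      have hmod := sq_emod_eight_of_odd hs
      have hs9 := nine_le_sq_of_odd hs h₁ h₂
      rcases le_or_gt (M - s ^ 2) 0 with h | h
      · exact hneg _ h
      · obtain ⟨j, hj⟩ : ∃ j : ℕ, M - s ^ 2 = 8 * j + 4 := ⟨((M - s ^ 2) / 8).toNat, by lia⟩
        rw [hj, ih j (by lia)]
    have hsub : ({1, -1} : Finset ℤ) ⊆ {s ∈ Icc (-M) M | Odd s} := by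
      simp only [insert_subset_iff, singleton_subset_iff, mem_filter, mem_Icc, odd_neg, odd_one]
      lia
    have hpair := hrec M hsq (by lia)
    rw [← sum_subset hsub fun s hs hs' ↦ ?_, sum_pair (by norm_num)] at hpair
    · have hN : M - 1 ^ 2 = 8 * k + 4 ∧ M - (-1) ^ 2 = 8 * k + 4 := by lia
      rw [hN.1, hN.2] at hpair
      have hprod : (16 * (k : ℤ)) * D (8 * k + 4) = 0 := by
        rw [← hpair, hM]
        ring
      exact (mul_eq_zero.mp hprod).resolve_left (by lia)
    · simp only [mem_insert, mem_singleton, not_or] at hs'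
      rw [htail s (mem_filter.mp hs).2 hs'.1 hs'.2, mul_zero]

lemma card_oddSphere_four (k : ℕ) :
    (#(oddSphere 4 (8 * k + 4)) : ℤ) = #(oddSphere 4 4) * quarterSigma (8 * k + 4) := by
  let D (N : ℤ) : ℤ := #(oddSphere 4 N) - #(oddSphere 4 4) * quarterSigma N
  suffices D (8 * k + 4) = 0 from sub_eq_zero.mp this
  refine eq_zero_of_odd_recursion (fun N hN ↦ ?_) (by
    change (#(oddSphere 4 4) : ℤ) - #(oddSphere 4 4) * quarterSigma 4 = 0
    rw [quarterSigma_four, mul_one, sub_self]) (fun M hsq hmod ↦ ?_) k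
  · change (#(oddSphere 4 N) : ℤ) - #(oddSphere 4 4) * quarterSigma N = 0
    rw [oddSphere_of_nonpos hN, quarterSigma_of_nonpos hN, card_empty, Nat.cast_zero, mul_zero,
      sub_zero]
  · have heven (s : ℤ) (hs : ¬ Odd s) : quarterSigma (M - s ^ 2) = 0 := by
      obtain ⟨u, rfl⟩ := Int.not_odd_iff_even.mp hs
      refine quarterSigma_of_not_dvd fun h ↦ ?_
      have : (u + u) ^ 2 = 4 * u ^ 2 := by ring
      lia
    have hsigma := sum_quarterSigma_recursion hsq
    rw [← sum_filter_of_ne (p := Odd) fun s _ hs ↦ by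
      by_contra hodd; exact hs (by rw [heven s hodd, mul_zero])] at hsigma
    have hodd := sum_oddSphere_recursion 4 M
    norm_num at hodd
    simp only [D, mul_sub, sum_sub_distrib, mul_left_comm _ (#(oddSphere 4 4) : ℤ), ← mul_sum,
      hsigma, hodd, mul_zero, sub_zero]

lemma le_card_oddSphere_four {m : ℕ} (hm : Odd m) : m ≤ #(oddSphere 4 (4 * m)) := by
  obtain ⟨k, rfl⟩ := hm
  have hsigma := le_quarterSigma (m := 2 * k + 1) (by lia)
  have hpos : 1 ≤ #(oddSphere 4 4) :=
    card_pos.mpr ⟨fun _ ↦ 1, mem_oddSphere.mpr ⟨fun _ ↦ odd_one, by simp⟩⟩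
  have hcard := card_oddSphere_four k
  rw [show 8 * (k : ℤ) + 4 = 4 * (2 * k + 1) by ring] at hcard
  zify at hpos ⊢
  rw [hcard]
  nlinarith

end OddPoints

section SphereCard

variable {n lam : ℕ}

/-- The finite set of lattice points in `ℤ^n` on the sphere `|x|² = lam`. -/
def sphere (n lam : ℕ) : Finset (Fin n → ℤ) :=
  {x ∈ Fintype.piFinset fun _ ↦ Icc (-(lam : ℤ)) lam | ∑ i, x i ^ 2 = (lam : ℤ)}

lemma mem_sphere {x : Fin n → ℤ} : x ∈ sphere n lam ↔ ∑ i, x i ^ 2 = (lam : ℤ) := by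
  simp only [sphere, mem_filter, Fintype.mem_piFinset, mem_Icc, and_iff_right_iff_imp]
  exact fun h i ↦ abs_le.mp (abs_le_of_sq_le (h ▸ sq_apply_le_sum x i))

lemma coe_sphere (n lam : ℕ) :
    (sphere n lam : Set (Fin n → ℤ)) = {x | ∑ i, x i ^ 2 = (lam : ℤ)} := by
  ext x
  simp [mem_sphere]

lemma sphereCount_eq_card (n lam : ℕ) : sphereCount n lam = #(sphere n lam) := by
  rw [sphereCount, ← coe_sphere, Set.ncard_coe_finset]

lemma card_sphere_pos (hn : 4 ≤ n) (lam : ℕ) : 0 < #(sphere n lam) := by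
  obtain ⟨k, rfl⟩ := Nat.exists_eq_add_of_le hn
  obtain ⟨a, b, c, d, h⟩ := Nat.sum_four_squares lam
  refine card_pos.mpr ⟨Fin.append ![(a : ℤ), b, c, d] fun _ ↦ 0, mem_sphere.mpr ?_⟩
  simp only [Fin.sum_univ_add, Fin.append_left, Fin.append_right, Fin.sum_univ_four]
  simp [← h]

lemma sum_equivTuple_sq (q : Quaternion ℤ) :
    ∑ i, Quaternion.equivTuple ℤ q i ^ 2 = Quaternion.normSq q := by
  simp [Quaternion.normSq_def', Fin.sum_univ_four]

/- An integral quaternion with odd coordinates is `e + 4k` with the coordinates of `e` equal to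
`±1`. As `star e * e = 4`, it is `(1 + k * star e) * e`. -/
lemma exists_eq_mul_unit_of_odd (x : Quaternion ℤ)
    (hx : ∀ i, Odd (Quaternion.equivTuple ℤ x i)) :
    ∃ e y : Quaternion ℤ, (∀ i, Quaternion.equivTuple ℤ e i ∈ ({1, -1} : Finset ℤ)) ∧
      x = y * e ∧ Quaternion.normSq e = 4 := by
  have hmod (t : ℤ) (ht : Odd t) : ∃ e k : ℤ, e ∈ ({1, -1} : Finset ℤ) ∧ t = e + 4 * k := by
    obtain ⟨u, rfl⟩ := ht
    simp only [mem_insert, mem_singleton]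
    rcases Int.even_or_odd u with ⟨w, rfl⟩ | ⟨w, rfl⟩
    · exact ⟨1, w, by lia, by ring⟩
    · exact ⟨-1, w + 1, by lia, by ring⟩
  choose e k he hk using fun i ↦ hmod _ (hx i)
  have hsq (i : Fin 4) : e i ^ 2 = 1 := by
    rcases mem_insert.mp (he i) with h | h
    · simp [h]
    · simp [mem_singleton.mp h]
  obtain ⟨E, hE⟩ := (Quaternion.equivTuple ℤ).surjective e
  obtain ⟨K, hK⟩ := (Quaternion.equivTuple ℤ).surjective k
  have hnorm : Quaternion.normSq E = 4 := by
    rw [← sum_equivTuple_sq, hE]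
    simp [hsq]
  have hEK : x = E + (4 : ℤ) • K := by
    refine (Quaternion.equivTuple ℤ).injective (funext fun i ↦ ?_)
    rw [hk i, ← hE, ← hK]
    fin_cases i <;> simp [-zsmul_eq_mul]
  refine ⟨E, 1 + K * star E, fun i ↦ hE ▸ he i, ?_, hnorm⟩
  rw [add_mul, one_mul, mul_assoc, Quaternion.star_mul_self, hnorm, Quaternion.mul_coe_eq_smul,
    hEK]

lemma card_oddSphere_four_le (m : ℕ) : #(oddSphere 4 (4 * m)) ≤ 16 * #(sphere 4 m) := by
  let signs : Finset (Fin 4 → ℤ) := Fintype.piFinset fun _ ↦ {1, -1}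
  let T := Quaternion.equivTuple ℤ
  have hsigns : #signs = 16 := by simp [signs, Fintype.card_piFinset]
  have hsub : oddSphere 4 (4 * m) ⊆
      (signs ×ˢ sphere 4 m).image fun v ↦ T (T.symm v.2 * T.symm v.1) := by
    intro x hx
    obtain ⟨hodd, hsum⟩ := mem_oddSphere.mp hx
    obtain ⟨e, y, he, hxy, hnorm⟩ :=
      exists_eq_mul_unit_of_odd (T.symm x) fun i ↦ by
        rw [T.apply_symm_apply]
        exact hodd i
    have hy : Quaternion.normSq y = m := by
      have hmul : Quaternion.normSq y * 4 = 4 * m := by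
        rw [← hsum, ← hnorm, ← map_mul, ← hxy, ← sum_equivTuple_sq, T.apply_symm_apply]
      lia
    refine mem_image.mpr ⟨(T e, T y), mem_product.mpr
      ⟨Fintype.mem_piFinset.mpr he, mem_sphere.mpr ((sum_equivTuple_sq y).trans hy)⟩, ?_⟩
    simp only [Equiv.symm_apply_apply, ← hxy, Equiv.apply_symm_apply]
  exact (card_le_card hsub).trans (card_image_le.trans (by rw [card_product, hsigns]))

lemma le_card_sphere_four {m : ℕ} (hm : Odd m) : m ≤ 16 * #(sphere 4 m) :=
  (le_card_oddSphere_four hm).trans (card_oddSphere_four_le m)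

lemma card_mul_le_card_sphere_succ {B : ℝ} {S : Finset ℕ} (hS : ∀ s ∈ S, s ^ 2 ≤ lam)
    (hB : ∀ s ∈ S, B ≤ #(sphere n (lam - s ^ 2))) : #S * B ≤ #(sphere (n + 1) lam) := by
  have hinj : ∑ s ∈ S, #(sphere n (lam - s ^ 2)) ≤ #(sphere (n + 1) lam) := by
    rw [← card_sigma]
    refine card_le_card_of_injOn (fun v ↦ Fin.cons (v.1 : ℤ) v.2) ?_ ?_
    · rintro ⟨s, x⟩ hv
      obtain ⟨hs, hx⟩ := mem_sigma.mp hv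
      rw [mem_coe, mem_sphere]
      simp only [Fin.sum_univ_succ, Fin.cons_zero, Fin.cons_succ, mem_sphere.mp hx]
      push_cast [Nat.cast_sub (hS s hs)]
      ring
    · rintro ⟨s, x⟩ _ ⟨t, y⟩ _ h
      obtain ⟨hst, rfl⟩ := Fin.cons_inj.mp h
      obtain rfl : s = t := by exact_mod_cast hst
      rfl
  calc #S * B = ∑ _s ∈ S, B := by simp
    _ ≤ ∑ s ∈ S, (#(sphere n (lam - s ^ 2)) : ℝ) := sum_le_sum hB
    _ ≤ #(sphere (n + 1) lam) := by exact_mod_cast hinj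

lemma sqrt_le_two_mul_nat_sqrt (hlam : 1 ≤ lam) : √(lam : ℝ) ≤ 2 * Nat.sqrt lam := by
  have hpos : (1 : ℝ) ≤ Nat.sqrt lam := by exact_mod_cast Nat.sqrt_pos.mpr hlam
  linarith [Real.real_sqrt_lt_nat_sqrt_succ (a := lam)]

lemma exists_finset_odd_sub_sq (hlam : 1 ≤ lam) :
    ∃ S : Finset ℕ, √(lam : ℝ) / 8 ≤ #S ∧ ∀ s ∈ S, 2 * s ^ 2 ≤ lam ∧ Odd (lam - s ^ 2) := by
  set T := Nat.sqrt lam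
  have hTsq : T * T ≤ lam := Nat.sqrt_le lam
  have hTpos : 1 ≤ T := Nat.sqrt_pos.mpr hlam
  set r := (lam + 1) % 2
  refine ⟨(range ((T + 3) / 4)).image fun j ↦ 2 * j + r, ?_, fun s hs ↦ ?_⟩
  · have hTS : (T : ℝ) ≤ 4 * ((T + 3) / 4 : ℕ) := by exact_mod_cast (by lia)
    rw [card_image_of_injective _ fun a b hab ↦ by simpa using hab, card_range]
    linarith [sqrt_le_two_mul_nat_sqrt hlam]
  · obtain ⟨j, hj, rfl⟩ := mem_image.mp hs
    have hjT : 2 * (2 * j + r) ≤ T + 1 := by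
      have := mem_range.mp hj
      lia
    have hle : 2 * (2 * j + r) ^ 2 ≤ lam := by
      rcases hTpos.eq_or_lt with hT1 | hT2
      · have hj0 : j = 0 := by lia
        have hr1 : r = 0 ∨ r = 1 ∧ 2 ≤ lam := by lia
        rcases hr1 with hr0 | ⟨hr1, hlam2⟩
        · simp [hj0, hr0]
        · simpa [hj0, hr1] using hlam2
      · rcases Nat.lt_or_ge T 3 with hT3 | hT3
        · have hs1 : 2 * j + r ≤ 1 := by lia
          nlinarith
        · nlinarith
    refine ⟨hle, ?_⟩
    rw [Nat.odd_sub (by lia), Nat.even_pow' two_ne_zero, Nat.odd_iff, Nat.even_iff]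
    lia

/- The first coordinates are chosen of the parity opposite to `lam`, so that the remaining sum of
four squares is odd. -/
lemma le_card_sphere_five (hlam : 1 ≤ lam) :
    1 / 256 * (lam : ℝ) ^ ((3 : ℝ) / 2) ≤ #(sphere 5 lam) := by
  obtain ⟨S, hcard, hS⟩ := exists_finset_odd_sub_sq hlam
  have hfour (s : ℕ) (hs : s ∈ S) : (lam : ℝ) / 32 ≤ #(sphere 4 (lam - s ^ 2)) := by
    obtain ⟨hle, hodd⟩ := hS s hs
    have : lam ≤ 32 * #(sphere 4 (lam - s ^ 2)) := by
      have := le_card_sphere_four hodd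
      lia
    rw [div_le_iff₀' (by norm_num)]
    exact_mod_cast this
  calc 1 / 256 * (lam : ℝ) ^ ((3 : ℝ) / 2) = √(lam : ℝ) / 8 * (lam / 32) := by
        rw [Real.sqrt_eq_rpow, show (3 : ℝ) / 2 = 1 / 2 + 1 by norm_num,
          Real.rpow_add_one (by positivity)]
        ring
    _ ≤ #S * (lam / 32) := by gcongr
    _ ≤ #(sphere 5 lam) :=
        card_mul_le_card_sphere_succ (fun s hs ↦ by have := (hS s hs).1; lia) hfour

lemma le_card_sphere_succ {a c : ℝ} (ha : 0 ≤ a) (hc : 0 ≤ c)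
    (h : ∀ lam : ℕ, 1 ≤ lam → c * (lam : ℝ) ^ a ≤ #(sphere n lam)) (hlam : 1 ≤ lam) :
    c * (1 / 2) ^ a / 4 * (lam : ℝ) ^ (1 / 2 + a) ≤ #(sphere (n + 1) lam) := by
  set T := Nat.sqrt lam
  have hTsq : T * T ≤ lam := Nat.sqrt_le lam
  have hS (s : ℕ) (hs : s ∈ range (T / 2 + 1)) : 2 * s ^ 2 ≤ lam := by
    have : 2 * s ≤ T := by
      have := mem_range.mp hs
      lia
    nlinarith
  have hslice (s : ℕ) (hs : s ∈ range (T / 2 + 1)) :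
      c * (1 / 2 * lam : ℝ) ^ a ≤ #(sphere n (lam - s ^ 2)) := by
    have hle := hS s hs
    refine le_trans ?_ (h (lam - s ^ 2) (by lia))
    have hhalf : (lam : ℝ) ≤ 2 * ((lam - s ^ 2 : ℕ) : ℝ) := by
      exact_mod_cast (by lia : lam ≤ 2 * (lam - s ^ 2))
    gcongr
    linarith
  have hcard : √(lam : ℝ) / 4 ≤ #(range (T / 2 + 1)) := by
    have hTS : (T : ℝ) ≤ 2 * (T / 2 + 1 : ℕ) := by exact_mod_cast (by lia)
    rw [card_range]
    linarith [sqrt_le_two_mul_nat_sqrt hlam]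
  calc c * (1 / 2) ^ a / 4 * (lam : ℝ) ^ (1 / 2 + a)
      = √(lam : ℝ) / 4 * (c * (1 / 2 * lam : ℝ) ^ a) := by
        rw [Real.rpow_add (by positivity), Real.mul_rpow (by norm_num) (by positivity),
          Real.sqrt_eq_rpow]
        ring
    _ ≤ #(range (T / 2 + 1)) * (c * (1 / 2 * lam : ℝ) ^ a) := by gcongr
    _ ≤ #(sphere (n + 1) lam) :=
        card_mul_le_card_sphere_succ (fun s hs ↦ by have := hS s hs; lia) hslice

lemma exists_le_card_sphere (hn : 5 ≤ n) : ∃ c : ℝ, 0 < c ∧ ∀ lam : ℕ, 1 ≤ lam →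
    c * (lam : ℝ) ^ ((n : ℝ) / 2 - 1) ≤ #(sphere n lam) := by
  induction n, hn using Nat.le_induction with
  | base =>
    refine ⟨1 / 256, by norm_num, fun lam hlam ↦ ?_⟩
    convert le_card_sphere_five hlam using 3
    norm_num
  | succ n hn ih =>
    obtain ⟨c, hc, h⟩ := ih
    have hexp : 0 ≤ (n : ℝ) / 2 - 1 := by
      have : (5 : ℝ) ≤ n := by exact_mod_cast hn
      linarith
    refine ⟨c * (1 / 2) ^ ((n : ℝ) / 2 - 1) / 4, by positivity, fun lam hlam ↦ ?_⟩
    convert le_card_sphere_succ hexp hc.le h hlam using 3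
    push_cast
    ring

end SphereCard

/-! ### Gauss sums and theta series -/

lemma sum_range_cast_eq_sum_zmod {M : Type*} [AddCommMonoid M] (q : ℕ) [NeZero q]
    (F : ZMod q → M) : ∑ r ∈ range q, F r = ∑ r, F r := by
  refine sum_nbij' (fun r ↦ (r : ZMod q)) ZMod.val (by simp) (fun r _ ↦ by simp [ZMod.val_lt])
    (fun r hr ↦ ZMod.val_cast_of_lt (mem_range.mp hr)) (fun r _ ↦ ZMod.natCast_zmod_val r)
    fun _ _ ↦ rfl

lemma gaussSum_mul_conj (q : ℕ) [NeZero q] {a : ZMod q} (ha : IsUnit a) (n : ZMod q) :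
    (∑ r, ZMod.stdAddChar (a * r ^ 2 + n * r)) *
        (starRingEnd ℂ) (∑ r, ZMod.stdAddChar (a * r ^ 2 + n * r)) =
      ∑ h : ZMod q, if 2 * h = 0 then q * ZMod.stdAddChar (a * h ^ 2 + n * h) else 0 := by
  have hshift (s : ZMod q) :
      ∑ r, ZMod.stdAddChar (a * r ^ 2 + n * r) *
          (starRingEnd ℂ) (ZMod.stdAddChar (a * s ^ 2 + n * s)) =
        ∑ h, ZMod.stdAddChar (a * h ^ 2 + n * h) * ZMod.stdAddChar (s * (2 * a * h)) := by
    rw [← Equiv.sum_comp (Equiv.addRight s)]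
    refine sum_congr rfl fun h _ ↦ ?_
    rw [← AddChar.map_neg_eq_conj, ← AddChar.map_add_eq_mul, ← AddChar.map_add_eq_mul,
      Equiv.coe_addRight]
    ring_nf
  have hunit (h : ZMod q) : 2 * a * h = 0 ↔ 2 * h = 0 := by
    rw [show 2 * a * h = a * (2 * h) by ring]
    exact ha.mul_right_eq_zero
  rw [map_sum, sum_mul_sum, sum_comm, sum_congr rfl fun s _ ↦ hshift s, sum_comm]
  refine sum_congr rfl fun h _ ↦ ?_
  rw [← mul_sum, AddChar.sum_mulShift _ (ZMod.isPrimitive_stdAddChar q), ZMod.card, mul_comm]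
  simp only [hunit, Nat.cast_ite, Nat.cast_zero, ite_mul, zero_mul]

lemma norm_gaussSum_le (q : ℕ) [NeZero q] {a : ZMod q} (ha : IsUnit a) (n : ZMod q) :
    ‖∑ r, ZMod.stdAddChar (a * r ^ 2 + n * r)‖ ≤ √(2 * q) := by
  have htorsion : #{h : ZMod q | 2 * h = 0} ≤ 2 := by
    simpa only [nsmul_eq_mul, Nat.cast_ofNat] using
      IsAddCyclic.card_nsmul_eq_zero_le (α := ZMod q) two_pos
  refine Real.le_sqrt_of_sq_le ?_
  calc ‖∑ r, ZMod.stdAddChar (a * r ^ 2 + n * r)‖ ^ 2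
      = ‖∑ h : ZMod q, if 2 * h = 0 then q * ZMod.stdAddChar (a * h ^ 2 + n * h) else 0‖ := by
        rw [← gaussSum_mul_conj q ha, norm_mul, RCLike.norm_conj, sq]
    _ ≤ ∑ h : ZMod q with 2 * h = 0, (q : ℝ) := by
        rw [← sum_filter]
        refine (norm_sum_le _ _).trans_eq (sum_congr rfl fun h _ ↦ ?_)
        rw [norm_mul, AddChar.norm_apply, mul_one, Complex.norm_natCast]
    _ ≤ 2 * q := by
        rw [sum_const, nsmul_eq_mul]
        gcongr
        exact_mod_cast htorsion

lemma summable_exp_neg_pi_mul_sq {T : ℝ} (hT : 0 < T) :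
    Summable fun n : ℤ ↦ Real.exp (-Real.pi * T * n ^ 2) := by
  refine (summable_pow_mul_jacobiTheta₂_term_bound 0 hT 0).congr fun n ↦ ?_
  ring_nf

lemma norm_cexp_neg_pi_mul_sq (w : ℂ) (x : ℤ) :
    ‖Complex.exp (-Real.pi * w * x ^ 2)‖ = Real.exp (-Real.pi * w.re * x ^ 2) := by
  rw [Complex.norm_exp, show (-Real.pi * w * x ^ 2 : ℂ) = w * ((-Real.pi * x ^ 2 : ℝ) : ℂ) by
    push_cast; ring, Complex.re_mul_ofReal]
  ring_nf

lemma summable_zmod_mul_cexp {w : ℂ} (hw : 0 < w.re) {q : ℕ} [NeZero q] (Φ : ZMod q → ℂ) :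
    Summable fun x : ℤ ↦ Φ x * Complex.exp (-Real.pi * w * x ^ 2) := by
  refine Summable.of_norm_bounded ((summable_exp_neg_pi_mul_sq hw).mul_left (∑ r, ‖Φ r‖))
    fun x ↦ ?_
  rw [norm_mul, norm_cexp_neg_pi_mul_sq]
  gcongr
  exact single_le_sum (fun r _ ↦ norm_nonneg (Φ r)) (mem_univ _)

lemma tsum_int_eq_sum_tsum_residue {f : ℤ → ℂ} (hf : Summable f) (q : ℕ) [NeZero q] :
    ∑' x, f x = ∑ r ∈ range q, ∑' k : ℤ, f (k * q + r) := by
  let residues := (Equiv.prodComm _ _).trans (Int.divModEquiv q).symm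
  rw [← residues.tsum_eq]
  change ∑' p, (f ∘ residues) p = _
  rw [Summable.tsum_prod (residues.summable_iff.mpr hf), tsum_fintype,
    sum_range fun r ↦ ∑' k : ℤ, f (k * q + r)]
  rfl

lemma tsum_cexp_residue {w : ℂ} {q : ℕ} [NeZero q] (hw : 0 < (w * q ^ 2).re) (r : ℤ) :
    ∑' k : ℤ, Complex.exp (-Real.pi * w * (k * q + r : ℤ) ^ 2) =
      1 / (w * q ^ 2) ^ (1 / 2 : ℂ) * ∑' n : ℤ,
        ZMod.stdAddChar (n * r : ZMod q) *
          Complex.exp (-Real.pi * (1 / (w * q ^ 2)) * n ^ 2) := by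
  have hq : (q : ℂ) ≠ 0 := by exact_mod_cast NeZero.ne q
  have hw0 : w ≠ 0 := by rintro rfl; simp at hw
  have hsq (k : ℤ) : Complex.exp (-Real.pi * w * (k * q + r : ℤ) ^ 2) =
      Complex.exp (-Real.pi * w * r ^ 2) *
        Complex.exp (-Real.pi * (w * q ^ 2) * k ^ 2 + 2 * Real.pi * (-w * q * r) * k) := by
    rw [← Complex.exp_add]
    push_cast
    ring_nf
  rw [tsum_congr hsq, tsum_mul_left, Complex.tsum_exp_neg_quadratic hw, mul_left_comm,
    ← tsum_mul_left]
  congr 1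
  refine tsum_congr fun n ↦ ?_
  have hchar := ZMod.stdAddChar_coe (N := q) (n * r)
  push_cast at hchar
  rw [hchar, ← Complex.exp_add, ← Complex.exp_add]
  congr 1
  field_simp
  linear_combination (-(w ^ 2 * q ^ 2 * r ^ 2)) * Complex.I_sq

lemma tsum_zmod_mul_cexp {w : ℂ} {q : ℕ} [NeZero q] (hw : 0 < w.re) (Φ : ZMod q → ℂ) :
    ∑' x : ℤ, Φ x * Complex.exp (-Real.pi * w * x ^ 2) =
      1 / (w * q ^ 2) ^ (1 / 2 : ℂ) * ∑' n : ℤ,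
        (∑ r, Φ r * ZMod.stdAddChar ((n : ZMod q) * r)) *
          Complex.exp (-Real.pi * (1 / (w * q ^ 2)) * n ^ 2) := by
  have hq : (0 : ℝ) < q := by exact_mod_cast NeZero.pos q
  have hwq : 0 < (w * q ^ 2).re := by
    rw [show w * (q : ℂ) ^ 2 = w * ((q ^ 2 : ℝ) : ℂ) by push_cast; rfl, Complex.re_mul_ofReal]
    positivity
  have hdual : 0 < (1 / (w * q ^ 2)).re := by
    rw [one_div, Complex.inv_re]
    exact div_pos hwq (Complex.normSq_pos.mpr fun h ↦ by simp [h] at hwq)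
  have hsum (r : ZMod q) := summable_zmod_mul_cexp hdual fun n ↦ Φ r * ZMod.stdAddChar (n * r)
  rw [tsum_int_eq_sum_tsum_residue (summable_zmod_mul_cexp hw Φ) q]
  simp_rw [sum_mul]
  rw [Summable.tsum_finsetSum fun r _ ↦ hsum r, ← sum_range_cast_eq_sum_zmod, mul_sum]
  refine sum_congr rfl fun r _ ↦ ?_
  have hres := tsum_cexp_residue hwq r
  push_cast at hres ⊢
  simp only [CharP.cast_eq_zero, mul_zero, zero_add, mul_assoc (Φ r), tsum_mul_left] at hres ⊢
  rw [hres, mul_left_comm]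

lemma norm_theta_le {w : ℂ} {q : ℕ} [NeZero q] {a : ZMod q} {T : ℝ} (ha : IsUnit a)
    (hw : 0 < w.re) (hT : 0 < T) (hTw : T ≤ (1 / (w * q ^ 2)).re) :
    ‖∑' x : ℤ, ZMod.stdAddChar (a * (x : ZMod q) ^ 2) * Complex.exp (-Real.pi * w * x ^ 2)‖ ≤
      √(2 / (q * ‖w‖)) * ∑' n : ℤ, Real.exp (-Real.pi * T * n ^ 2) := by
  have hq : (0 : ℝ) < q := by exact_mod_cast NeZero.pos q
  have hdual : ‖∑' n : ℤ, (∑ r, ZMod.stdAddChar (a * r ^ 2) * ZMod.stdAddChar ((n : ZMod q) * r)) *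
      Complex.exp (-Real.pi * (1 / (w * q ^ 2)) * n ^ 2)‖ ≤
      √(2 * q) * ∑' n : ℤ, Real.exp (-Real.pi * T * n ^ 2) := by
    rw [← tsum_mul_left]
    refine tsum_of_norm_bounded ((summable_exp_neg_pi_mul_sq hT).mul_left _).hasSum fun n ↦ ?_
    simp_rw [← AddChar.map_add_eq_mul]
    rw [norm_mul, norm_cexp_neg_pi_mul_sq]
    refine mul_le_mul (norm_gaussSum_le q ha n) (Real.exp_le_exp.mpr ?_) (by positivity)
      (by positivity)
    have : 0 ≤ Real.pi * (n : ℝ) ^ 2 := by positivity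
    nlinarith
  have hfactor : ‖1 / (w * q ^ 2) ^ (1 / 2 : ℂ)‖ * √(2 * q) = √(2 / (q * ‖w‖)) := by
    rw [show (1 / 2 : ℂ) = ((1 / 2 : ℝ) : ℂ) by push_cast; rfl, norm_div, norm_one,
      Complex.norm_cpow_real, ← Real.sqrt_eq_rpow, one_div, ← Real.sqrt_inv,
      ← Real.sqrt_mul (by positivity), norm_mul, norm_pow, Complex.norm_natCast]
    congr 1
    field_simp
  rw [tsum_zmod_mul_cexp hw fun r ↦ ZMod.stdAddChar (a * r ^ 2), norm_mul, ← hfactor,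
    mul_assoc]
  gcongr

/-! ### Exponential sums over squares -/

/-- The additive character `e(t) = exp(2πit)` of the line, with values in `ℂ`. -/
def expChar : AddChar ℝ ℂ := Circle.coeHom.compAddChar Real.fourierChar

lemma expChar_apply (t : ℝ) : expChar t = Complex.exp (2 * Real.pi * t * Complex.I) := by
  change ((Real.fourierChar t : Circle) : ℂ) = _
  rw [Real.fourierChar_apply]
  push_cast
  rfl

lemma norm_expChar (t : ℝ) : ‖expChar t‖ = 1 := Circle.norm_coe _

@[fun_prop]
lemma continuous_expChar : Continuous expChar :=
  continuous_subtype_val.comp Real.continuous_fourierChar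

lemma expChar_sum {ι : Type*} (s : Finset ι) (f : ι → ℝ) :
    expChar (∑ i ∈ s, f i) = ∏ i ∈ s, expChar (f i) :=
  map_prod expChar.toMonoidHom (fun i ↦ Multiplicative.ofAdd (f i)) s

lemma expChar_intCast_div (m : ℤ) (q : ℕ) [NeZero q] :
    expChar (m / q) = ZMod.stdAddChar (m : ZMod q) := by
  rw [expChar_apply, ZMod.stdAddChar_coe]
  push_cast
  ring_nf

lemma integral_expChar_mul_intCast (m : ℤ) :
    ∫ α in (0 : ℝ)..1, expChar (α * m) = if m = 0 then 1 else 0 := by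
  split_ifs with hm
  · simp [hm]
  have hc : 2 * Real.pi * m * Complex.I ≠ 0 := by
    simp [hm, Real.pi_ne_zero]
  have hexp (α : ℝ) : expChar (α * m) = Complex.exp (2 * Real.pi * m * Complex.I * α) := by
    rw [expChar_apply]
    push_cast
    ring_nf
  have hone : Complex.exp (2 * Real.pi * m * Complex.I) = 1 :=
    Complex.exp_eq_one_iff.mpr ⟨m, by ring⟩
  simp [hexp, integral_exp_mul_complex hc, hone]

/-- The weighted Weyl sum `∑ x ∈ s, g x * e(α x²)`. -/
def weylSum (s : Finset ℤ) (g : ℤ → ℝ) (α : ℝ) : ℂ := ∑ x ∈ s, g x * expChar (α * x ^ 2)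

@[fun_prop]
lemma continuous_weylSum (s : Finset ℤ) (g : ℤ → ℝ) : Continuous (weylSum s g) := by
  unfold weylSum
  fun_prop

/-- The integers `x` with `x² ≤ lam`. -/
def rootInterval (lam : ℕ) : Finset ℤ := Icc (-(Nat.sqrt lam : ℤ)) (Nat.sqrt lam)

/-- The Gaussian weight at scale `√lam`, whose Weyl sums are values of a theta function. -/
def gaussian (lam : ℕ) (x : ℤ) : ℝ := Real.exp (-Real.pi * (1 / lam) * x ^ 2)

lemma one_fifth_le_re_one_div {lam q : ℕ} {β : ℝ} (hq : 0 < q) (hqlam : q ≤ Nat.sqrt lam)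
    (hβ : q * |β| ≤ 1 / (Nat.sqrt lam + 1)) :
    1 / 5 ≤ (1 / ((1 / lam - 2 * β * Complex.I) * q ^ 2) : ℂ).re := by
  have hlam : (0 : ℝ) < lam := by
    exact_mod_cast hq.trans_le (hqlam.trans (Nat.sqrt_le_self lam))
  have hqsq : (q : ℝ) ^ 2 ≤ lam := by exact_mod_cast Nat.le_sqrt'.mp hqlam
  have hβsq : (q * |β|) ^ 2 * lam ≤ 1 := by
    have hsqrt : (lam : ℝ) ≤ (Nat.sqrt lam + 1) ^ 2 := by exact_mod_cast (Nat.lt_succ_sqrt' lam).le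
    calc (q * |β|) ^ 2 * lam ≤ (1 / (Nat.sqrt lam + 1)) ^ 2 * (Nat.sqrt lam + 1) ^ 2 := by gcongr
      _ = 1 := by field_simp
  have hre : (1 / ((1 / lam - 2 * β * Complex.I) * q ^ 2) : ℂ).re =
      lam / (q ^ 2 * (1 + 4 * β ^ 2 * lam ^ 2)) := by
    have hw : (1 / lam - 2 * β * Complex.I) * q ^ 2 =
        ⟨(q : ℝ) ^ 2 / lam, -(q ^ 2 * (2 * β))⟩ := by
      apply Complex.ext <;>
        simp [← Complex.ofReal_natCast, ← Complex.ofReal_pow, ← Complex.ofReal_inv] <;> ring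
    rw [hw, one_div, Complex.inv_re, Complex.normSq_mk]
    field_simp
    ring
  rw [hre, le_div_iff₀ (by positivity)]
  rw [mul_pow, sq_abs] at hβsq
  nlinarith

lemma add_abs_le_two_mul_norm (t β : ℝ) : t + |β| ≤ 2 * ‖(t - 2 * β * Complex.I : ℂ)‖ := by
  have hre := Complex.re_le_norm (t - 2 * β * Complex.I)
  have him := Complex.abs_im_le_norm (t - 2 * β * Complex.I)
  simp only [Complex.sub_re, Complex.ofReal_re, Complex.mul_re, Complex.re_ofNat, Complex.im_ofNat,
    Complex.ofReal_im, mul_zero, sub_zero, Complex.I_re, Complex.mul_im, zero_mul, add_zero,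
    Complex.I_im, mul_one, sub_self, Complex.sub_im, zero_sub, abs_neg, abs_mul,
    Nat.abs_ofNat] at hre him
  linarith [abs_nonneg β]

lemma gaussian_mul_expChar (lam q : ℕ) [NeZero q] (a : ℤ) (α : ℝ) (x : ℤ) :
    gaussian lam x * expChar (α * x ^ 2) = ZMod.stdAddChar ((a : ZMod q) * (x : ZMod q) ^ 2) *
      Complex.exp (-Real.pi * (1 / lam - 2 * (α - a / q : ℝ) * Complex.I) * x ^ 2) := by
  have hsplit : α * x ^ 2 = ((a * x ^ 2 : ℤ) : ℝ) / q + (α - a / q) * x ^ 2 := by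
    push_cast
    ring
  rw [hsplit, AddChar.map_add_eq_mul, expChar_intCast_div, expChar_apply, mul_left_comm, gaussian,
    Complex.ofReal_exp, ← Complex.exp_add]
  push_cast
  ring_nf

lemma norm_tsum_gaussian_mul_expChar_le {lam q : ℕ} [NeZero q] {a : ℤ} {α : ℝ}
    (ha : IsCoprime a (q : ℤ)) (hqlam : q ≤ Nat.sqrt lam)
    (hα : q * |α - a / q| ≤ 1 / (Nat.sqrt lam + 1)) :
    ‖∑' x : ℤ, gaussian lam x * expChar (α * x ^ 2)‖ ≤
      2 * (q * (1 / lam + |α - a / q|)) ^ (-(1 / 2) : ℝ) *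
        ∑' n : ℤ, Real.exp (-Real.pi * (1 / 5) * n ^ 2) := by
  have hq := NeZero.pos q
  have hlam : (0 : ℝ) < lam := by
    exact_mod_cast hq.trans_le (hqlam.trans (Nat.sqrt_le_self lam))
  have hunit : IsUnit (a : ZMod q) := (ZMod.coe_int_isUnit_iff_isCoprime a q).mpr ha.symm
  have hre : 0 < (1 / lam - 2 * (α - a / q : ℝ) * Complex.I : ℂ).re := by
    simpa using hlam
  have hnorm := add_abs_le_two_mul_norm (1 / lam) (α - a / q)
  push_cast at hnorm
  rw [tsum_congr (gaussian_mul_expChar lam q a α)]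
  refine (norm_theta_le hunit hre (by norm_num) (one_fifth_le_re_one_div hq hqlam hα)).trans ?_
  gcongr
  have hpos : 0 < 1 / (lam : ℝ) + |α - a / q| := by positivity
  have hX : 0 < q * (1 / (lam : ℝ) + |α - a / q|) := by positivity
  rw [Real.rpow_neg hX.le, ← Real.sqrt_eq_rpow, ← Real.sqrt_inv,
    ← Real.sqrt_sq (zero_le_two : (0 : ℝ) ≤ 2), ← Real.sqrt_mul (by positivity), ← div_eq_mul_inv]
  refine Real.sqrt_le_sqrt ?_
  rw [div_le_div_iff₀ (mul_pos (by positivity) (by push_cast; linarith)) hX]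
  push_cast
  nlinarith

lemma summable_gaussian {lam : ℕ} (hlam : 0 < lam) : Summable (gaussian lam) :=
  summable_exp_neg_pi_mul_sq (by positivity)

lemma one_le_two_mul_rpow_neg_half {X : ℝ} (hX : 0 < X) (hX4 : X ≤ 4) :
    1 ≤ 2 * X ^ (-(1 / 2) : ℝ) := by
  have := Real.rpow_le_rpow_of_nonpos hX hX4 (show (-(1 / 2) : ℝ) ≤ 0 by norm_num)
  rw [show (4 : ℝ) = 2 ^ (2 : ℝ) by norm_num, ← Real.rpow_mul zero_le_two,
    show (2 : ℝ) * -(1 / 2) = -1 by norm_num, Real.rpow_neg_one] at this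
  linarith

lemma exists_norm_weylSum_gaussian_sub_tsum_le {lam : ℕ} (hlam : 0 < lam) {ε : ℝ} (hε : 0 < ε) :
    ∃ s : Finset ℤ, rootInterval lam ⊆ s ∧ ∀ α : ℝ, ‖weylSum s (gaussian lam) α -
      ∑' x : ℤ, gaussian lam x * expChar (α * x ^ 2)‖ ≤ ε := by
  have hsum := summable_gaussian hlam
  obtain ⟨t, ht⟩ := Metric.tendsto_atTop.mp hsum.hasSum ε hε
  refine ⟨rootInterval lam ∪ t, subset_union_left, fun α ↦ ?_⟩
  set s := rootInterval lam ∪ t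
  have hnorm (x : ℤ) : ‖gaussian lam x * expChar (α * x ^ 2)‖ = gaussian lam x := by
    rw [norm_mul, norm_expChar, mul_one, Complex.norm_real]
    exact Real.norm_of_nonneg (Real.exp_nonneg _)
  have hsum' : Summable fun x : ℤ ↦ gaussian lam x * expChar (α * x ^ 2) :=
    .of_norm (hsum.congr fun x ↦ (hnorm x).symm)
  rw [weylSum, ← hsum'.sum_add_tsum_compl (s := s), sub_add_cancel_left, norm_neg]
  refine (tsum_of_norm_bounded (hsum.subtype _).hasSum fun x ↦ (hnorm x).le).trans ?_
  have hdist := ht s subset_union_right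
  rw [Real.dist_eq, ← hsum.sum_add_tsum_compl (s := s)] at hdist
  change ∑' x : ((s : Set ℤ)ᶜ : Set ℤ), gaussian lam x ≤ ε
  linarith [(abs_lt.mp hdist).1]

/- Truncating the theta series costs at most `1`, which the main term absorbs. -/
lemma exists_norm_weylSum_gaussian_le : ∃ B : ℝ, 0 < B ∧ ∀ lam : ℕ, 1 ≤ lam →
    ∃ s : Finset ℤ, rootInterval lam ⊆ s ∧ ∀ (q : ℕ) (a : ℤ) (α : ℝ), 1 ≤ q → IsCoprime a q →
      q ≤ Nat.sqrt lam → q * |α - a / q| ≤ 1 / (Nat.sqrt lam + 1) →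
      ‖weylSum s (gaussian lam) α‖ ≤ B * (q * (1 / lam + |α - a / q|)) ^ (-(1 / 2) : ℝ) := by
  set Θ := ∑' n : ℤ, Real.exp (-Real.pi * (1 / 5) * n ^ 2)
  have : 0 ≤ Θ := tsum_nonneg fun n ↦ by positivity
  refine ⟨2 * Θ + 2, by positivity, fun lam hlam ↦ ?_⟩
  obtain ⟨s, hs, htruncation⟩ := exists_norm_weylSum_gaussian_sub_tsum_le hlam one_pos
  refine ⟨s, hs, fun q a α hq ha hqlam hα ↦ ?_⟩
  have : NeZero q := ⟨by lia⟩
  have hlam' : (0 : ℝ) < lam := by exact_mod_cast hlam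
  set X := q * (1 / (lam : ℝ) + |α - a / q|)
  have hX : 0 < X := by positivity
  have hX4 : X ≤ 4 := by
    have hmain : q * (1 / (lam : ℝ)) ≤ 1 := by
      rw [mul_one_div, div_le_one hlam']
      exact_mod_cast hqlam.trans (Nat.sqrt_le_self lam)
    have herr : 1 / ((Nat.sqrt lam : ℝ) + 1) ≤ 1 := div_le_one_of_le₀ (by simp) (by positivity)
    rw [show X = q * (1 / (lam : ℝ)) + q * |α - a / q| from mul_add ..]
    linarith
  calc ‖weylSum s (gaussian lam) α‖
      ≤ 1 + ‖∑' x : ℤ, gaussian lam x * expChar (α * x ^ 2)‖ :=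
        (norm_le_norm_sub_add _ _).trans (add_le_add_left (htruncation α) _)
    _ ≤ 1 + 2 * X ^ (-(1 / 2) : ℝ) * Θ := by
        gcongr
        exact norm_tsum_gaussian_mul_expChar_le ha hqlam hα
    _ ≤ (2 * Θ + 2) * X ^ (-(1 / 2) : ℝ) := by linarith [one_le_two_mul_rpow_neg_half hX hX4]

lemma sum_prod_le_integral_prod_norm_weylSum {ι : Type*} [Fintype ι] [DecidableEq ι]
    (s : ι → Finset ℤ) (φ : ι → ℤ → ℝ) (m : ℤ) :
    ∑ x ∈ Fintype.piFinset s with ∑ k, x k ^ 2 = m, ∏ k, φ k (x k) ≤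
      ∫ α in (0 : ℝ)..1, ∏ k, ‖weylSum (s k) (φ k) α‖ := by
  have hexpand (α : ℝ) : (∏ k, weylSum (s k) (φ k) α) * expChar (-(α * m)) =
      ∑ x ∈ Fintype.piFinset s,
        (∏ k, (φ k (x k) : ℂ)) * expChar (α * ((∑ k, x k ^ 2 - m : ℤ) : ℝ)) := by
    simp only [weylSum]
    rw [prod_univ_sum, sum_mul]
    refine sum_congr rfl fun x _ ↦ ?_
    rw [prod_mul_distrib, ← expChar_sum, mul_assoc, ← AddChar.map_add_eq_mul]
    push_cast
    rw [mul_sub, mul_sum, sub_eq_add_neg]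
  have hcoeff : ∫ α in (0 : ℝ)..1, (∏ k, weylSum (s k) (φ k) α) * expChar (-(α * m)) =
      (∑ x ∈ Fintype.piFinset s with ∑ k, x k ^ 2 = m, ∏ k, φ k (x k) : ℝ) := by
    simp_rw [hexpand]
    rw [intervalIntegral.integral_finsetSum fun x _ ↦
      Continuous.intervalIntegrable (by fun_prop) _ _]
    simp_rw [intervalIntegral.integral_const_mul, integral_expChar_mul_intCast, sub_eq_zero,
      mul_ite, mul_one, mul_zero]
    rw [← sum_filter]
    push_cast
    rfl
  have hnorm := intervalIntegral.norm_integral_le_integral_norm (μ := volume) (zero_le_one' ℝ)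
    (f := fun α ↦ (∏ k, weylSum (s k) (φ k) α) * expChar (-(α * m)))
  rw [hcoeff, Complex.norm_real] at hnorm
  simp only [norm_mul, norm_expChar, mul_one, norm_prod] at hnorm
  exact (Real.le_norm_self _).trans hnorm

lemma sum_zmod_norm_sum_mul_stdAddChar_sq_le {ι : Type*} (q : ℕ) [NeZero q] (s : Finset ι)
    (c : ι → ℂ) (v : ι → ZMod q) :
    ∑ a, ‖∑ i ∈ s, c i * ZMod.stdAddChar (a * v i)‖ ^ 2 ≤
      q * ∑ i ∈ s, ∑ j ∈ s, if v i = v j then ‖c i‖ * ‖c j‖ else 0 := by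
  have hexpand (a : ZMod q) : (‖∑ i ∈ s, c i * ZMod.stdAddChar (a * v i)‖ ^ 2 : ℂ) =
      ∑ i ∈ s, ∑ j ∈ s,
        c i * (starRingEnd ℂ) (c j) * ZMod.stdAddChar (a * (v i - v j)) := by
    rw [← Complex.mul_conj', map_sum, sum_mul_sum]
    refine sum_congr rfl fun i _ ↦ sum_congr rfl fun j _ ↦ ?_
    rw [map_mul (starRingEnd ℂ), ← AddChar.map_neg_eq_conj, mul_mul_mul_comm,
      ← AddChar.map_add_eq_mul]
    ring_nf
  have hidentity : ((∑ a, ‖∑ i ∈ s, c i * ZMod.stdAddChar (a * v i)‖ ^ 2 : ℝ) : ℂ) =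
      q * ∑ i ∈ s, ∑ j ∈ s, if v i = v j then c i * (starRingEnd ℂ) (c j) else 0 := by
    push_cast
    rw [sum_congr rfl fun a _ ↦ hexpand a, sum_comm, mul_sum]
    refine sum_congr rfl fun i _ ↦ ?_
    rw [sum_comm, mul_sum]
    refine sum_congr rfl fun j _ ↦ ?_
    rw [← mul_sum, AddChar.sum_mulShift _ (ZMod.isPrimitive_stdAddChar q), ZMod.card]
    simp only [sub_eq_zero]
    split_ifs <;> simp [mul_comm]
  refine (Real.le_norm_self _).trans ?_
  rw [← Complex.norm_real, hidentity, norm_mul, Complex.norm_natCast]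
  gcongr
  refine norm_sum_le_of_le _ fun i _ ↦ norm_sum_le_of_le _ fun j _ ↦ ?_
  split_ifs <;> simp

/-- The sum of `g x * g y` over pairs in `s` with `x² ≡ y²` modulo `q`. -/
def congruentPairSum (q : ℕ) (s : Finset ℤ) (g : ℤ → ℝ) : ℝ :=
  ∑ x ∈ s, ∑ y ∈ s, if (q : ℤ) ∣ x ^ 2 - y ^ 2 then g x * g y else 0

section

variable {g : ℤ → ℝ} (hg : ∀ x, 0 ≤ g x) (s : Finset ℤ) (q : ℕ)

include hg

lemma congruentPairSum_nonneg : 0 ≤ congruentPairSum q s g :=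
  sum_nonneg fun x _ ↦ sum_nonneg fun y _ ↦ by
    split_ifs
    exacts [mul_nonneg (hg x) (hg y), le_rfl]

variable [NeZero q] (β : ℝ)

lemma sum_range_norm_weylSum_sq_le :
    ∑ a ∈ range q, ‖weylSum s g (a / q + β)‖ ^ 2 ≤ q * congruentPairSum q s g := by
  have hsplit (a : ℕ) : weylSum s g (a / q + β) = ∑ x ∈ s,
      (g x * expChar (β * x ^ 2)) * ZMod.stdAddChar ((a : ZMod q) * (x : ZMod q) ^ 2) := by
    refine sum_congr rfl fun x _ ↦ ?_
    have hchar := expChar_intCast_div (a * x ^ 2) q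
    push_cast at hchar
    rw [mul_assoc, ← hchar, ← AddChar.map_add_eq_mul]
    ring_nf
  have horth := sum_zmod_norm_sum_mul_stdAddChar_sq_le q s (fun x ↦ g x * expChar (β * x ^ 2))
    fun x ↦ (x : ZMod q) ^ 2
  have hcongr (x y : ℤ) : (x : ZMod q) ^ 2 = (y : ZMod q) ^ 2 ↔ (q : ℤ) ∣ x ^ 2 - y ^ 2 := by
    rw [← ZMod.intCast_zmod_eq_zero_iff_dvd, ← sub_eq_zero]
    push_cast
    rfl
  simp only [norm_mul, norm_expChar, mul_one, Complex.norm_real, Real.norm_of_nonneg (hg _),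
    hcongr] at horth
  simp_rw [hsplit]
  rw [← sum_range_cast_eq_sum_zmod] at horth
  exact horth

lemma sum_range_succ_norm_weylSum_sq_le :
    ∑ a ∈ range (q + 1), ‖weylSum s g (a / q + β)‖ ^ 2 ≤ 2 * (q * congruentPairSum q s g) := by
  have hq : (q : ℝ) ≠ 0 := by exact_mod_cast NeZero.ne q
  have hperiod : weylSum s g ((q : ℝ) / q + β) = weylSum s g ((0 : ℕ) / q + β) := by
    refine sum_congr rfl fun x _ ↦ ?_
    have hone := expChar_intCast_div (x ^ 2) 1
    rw [Subsingleton.elim ((x ^ 2 : ℤ) : ZMod 1) 0, AddChar.map_zero_eq_one] at hone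
    push_cast at hone
    rw [div_self hq, add_mul, AddChar.map_add_eq_mul, one_mul, ← div_one ((x : ℝ) ^ 2), hone]
    simp
  have hzero := single_le_sum (f := fun a : ℕ ↦ ‖weylSum s g (a / q + β)‖ ^ 2)
    (fun _ _ ↦ by positivity) (mem_range.mpr (NeZero.pos q))
  rw [sum_range_succ, hperiod]
  linarith [sum_range_norm_weylSum_sq_le hg s q β]

end

/-! ### Major arcs -/

/-- The profile `(1/lam + |β|)^(-3/2)` of the third power of the theta function at distance `β` from
a rational point. -/
def arcProfile (lam : ℕ) (β : ℝ) : ℝ := (1 / lam + |β|) ^ (-(3 / 2) : ℝ)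

/-- The sum of the arc profiles around all fractions in `[0, 1]` of denominator at most `√lam`. It
dominates the third power of the theta function on all of `[0, 1]`, so no minor arcs are needed. -/
def arcMajorant (lam : ℕ) (α : ℝ) : ℝ :=
  ∑ q ∈ Icc 1 (Nat.sqrt lam), ∑ a ∈ range (q + 1),
    (q : ℝ) ^ (-(3 / 2) : ℝ) * arcProfile lam (α - a / q)

/-- The divisor sum `∑ q ∣ m, q^(-1/2)` truncated at `q ≤ √lam`. -/
def truncatedDivisorSum (lam : ℕ) (m : ℤ) : ℝ :=
  ∑ q ∈ (Icc 1 (Nat.sqrt lam)).filter fun q : ℕ ↦ (q : ℤ) ∣ m, (q : ℝ) ^ (-(1 / 2) : ℝ)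

lemma arcProfile_nonneg (lam : ℕ) (β : ℝ) : 0 ≤ arcProfile lam β := by
  unfold arcProfile
  positivity

lemma mul_arcProfile_nonneg (lam q : ℕ) (β : ℝ) :
    0 ≤ (q : ℝ) ^ (-(3 / 2) : ℝ) * arcProfile lam β :=
  mul_nonneg (by positivity) (arcProfile_nonneg _ _)

lemma arcMajorant_nonneg (lam : ℕ) (α : ℝ) : 0 ≤ arcMajorant lam α :=
  sum_nonneg fun _ _ ↦ sum_nonneg fun _ _ ↦ mul_arcProfile_nonneg _ _ _

lemma continuous_arcProfile {lam : ℕ} (hlam : 1 ≤ lam) : Continuous (arcProfile lam) := by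
  have : (0 : ℝ) < lam := by exact_mod_cast hlam
  exact Continuous.rpow_const (by fun_prop) fun β ↦ .inl (by positivity)

lemma continuous_arcMajorant {lam : ℕ} (hlam : 1 ≤ lam) : Continuous (arcMajorant lam) := by
  have := continuous_arcProfile hlam
  unfold arcMajorant
  fun_prop

lemma integral_arcProfile_le {lam : ℕ} (hlam : 1 ≤ lam) :
    ∫ β in (-1 : ℝ)..1, arcProfile lam β ≤ 4 * √lam := by
  have hlam' : (0 : ℝ) < lam := by exact_mod_cast hlam
  have hcont := continuous_arcProfile hlam
  have hhalf : ∫ β in (0 : ℝ)..1, arcProfile lam β ≤ 2 * √lam := by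
    have habs : ∫ β in (0 : ℝ)..1, arcProfile lam β =
        ∫ β in (0 : ℝ)..1, (1 / lam + β) ^ (-(3 / 2) : ℝ) := by
      refine intervalIntegral.integral_congr fun β hβ ↦ ?_
      rw [Set.uIcc_of_le zero_le_one] at hβ
      simp only [arcProfile, abs_of_nonneg hβ.1]
    have hzero : (0 : ℝ) ∉ Set.uIcc (1 / (lam : ℝ) + 0) (1 / lam + 1) := by
      rw [Set.uIcc_of_le (by linarith)]
      exact fun h ↦ (one_div_pos.mpr hlam').not_ge (by simpa using h.1)
    have hleft : (1 / (lam : ℝ) + 0) ^ (-(1 / 2) : ℝ) = √lam := by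
      rw [add_zero, one_div, Real.inv_rpow hlam'.le, Real.rpow_neg hlam'.le, inv_inv,
        Real.sqrt_eq_rpow]
    rw [habs, intervalIntegral.integral_comp_add_left fun x ↦ x ^ (-(3 / 2) : ℝ),
      integral_rpow (.inr ⟨by norm_num, hzero⟩), show (-(3 / 2) + 1 : ℝ) = -(1 / 2) by norm_num,
      hleft]
    have : 0 ≤ (1 / (lam : ℝ) + 1) ^ (-(1 / 2) : ℝ) := by positivity
    linarith
  have heven : ∫ β in (-1 : ℝ)..0, arcProfile lam β = ∫ β in (0 : ℝ)..1, arcProfile lam β := by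
    simpa [arcProfile] using
      (intervalIntegral.integral_comp_neg (arcProfile lam) (a := 0) (b := 1)).symm
  rw [← intervalIntegral.integral_add_adjacent_intervals (hcont.intervalIntegrable (-1) 0)
    (hcont.intervalIntegrable 0 1), heven]
  linarith

lemma exists_coprime_mul_abs_sub_div_le {α : ℝ} (hα₀ : 0 ≤ α) (hα₁ : α ≤ 1) {N : ℕ} (hN : 0 < N) :
    ∃ q a : ℕ, 1 ≤ q ∧ q ≤ N ∧ a ≤ q ∧ IsCoprime (a : ℤ) q ∧ q * |α - a / q| ≤ 1 / (N + 1) := by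
  obtain ⟨r, hr, hrN⟩ := Real.exists_rat_abs_sub_le_and_den_le α hN
  have hq : (0 : ℝ) < r.den := by exact_mod_cast r.den_pos
  have hN' : (1 : ℝ) ≤ N := by exact_mod_cast hN
  have hdist : r.den * |α - r.num / r.den| ≤ 1 / (N + 1) := by
    rw [← Rat.cast_def]
    calc r.den * |α - r| ≤ r.den * (1 / ((N + 1) * r.den)) := by gcongr
      _ = 1 / (N + 1) := by field_simp
  have hlt : |r.den * α - r.num| < 1 := by
    rw [show r.den * α - r.num = r.den * (α - r.num / r.den) by field_simp, abs_mul,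
      abs_of_pos hq]
    exact hdist.trans_lt ((div_lt_one (by positivity)).mpr (by linarith))
  rw [abs_lt] at hlt
  have hnum₀ : (-1 : ℤ) < r.num := by
    exact_mod_cast (show (-1 : ℝ) < r.num by nlinarith)
  have hnum₁ : r.num < (r.den : ℤ) + 1 := by
    exact_mod_cast (show (r.num : ℝ) < r.den + 1 by nlinarith)
  obtain ⟨a, ha⟩ := Int.eq_ofNat_of_zero_le (show 0 ≤ r.num by lia)
  refine ⟨r.den, a, r.den_pos, hrN, by lia, ?_, ?_⟩
  · rw [← ha, Int.isCoprime_iff_gcd_eq_one]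
    exact r.reduced
  · rwa [ha, Int.cast_natCast] at hdist

lemma rpow_neg_half_pow_three_le_arcMajorant {lam q a : ℕ} (hq : 1 ≤ q) (hqlam : q ≤ Nat.sqrt lam)
    (haq : a ≤ q) (α : ℝ) :
    ((q * (1 / lam + |α - a / q|)) ^ (-(1 / 2) : ℝ)) ^ 3 ≤ arcMajorant lam α := by
  calc ((q * (1 / lam + |α - a / q|)) ^ (-(1 / 2) : ℝ)) ^ 3
      = (q : ℝ) ^ (-(3 / 2) : ℝ) * arcProfile lam (α - a / q) := by
        rw [← Real.rpow_natCast, ← Real.rpow_mul (by positivity), arcProfile,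
          ← Real.mul_rpow (by positivity) (by positivity)]
        norm_num
    _ ≤ ∑ a ∈ range (q + 1), (q : ℝ) ^ (-(3 / 2) : ℝ) * arcProfile lam (α - a / q) :=
        single_le_sum (f := fun a : ℕ ↦ (q : ℝ) ^ (-(3 / 2) : ℝ) * arcProfile lam (α - a / q))
          (fun _ _ ↦ mul_arcProfile_nonneg _ _ _) (mem_range.mpr (by lia))
    _ ≤ arcMajorant lam α :=
        single_le_sum (f := fun q : ℕ ↦ ∑ a ∈ range (q + 1),
            (q : ℝ) ^ (-(3 / 2) : ℝ) * arcProfile lam (α - a / q))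
          (fun _ _ ↦ sum_nonneg fun _ _ ↦ mul_arcProfile_nonneg _ _ _) (mem_Icc.mpr ⟨hq, hqlam⟩)

lemma exists_norm_weylSum_gaussian_pow_le : ∃ B : ℝ, 0 < B ∧ ∀ lam : ℕ, 1 ≤ lam →
    ∃ s : Finset ℤ, rootInterval lam ⊆ s ∧ ∀ α : ℝ, 0 ≤ α → α ≤ 1 → ∀ m : ℕ, 3 ≤ m →
      ‖weylSum s (gaussian lam) α‖ ^ m ≤
        B ^ m * (lam : ℝ) ^ (((m : ℝ) - 3) / 2) * arcMajorant lam α := by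
  obtain ⟨B, hB, hweyl⟩ := exists_norm_weylSum_gaussian_le
  refine ⟨B, hB, fun lam hlam ↦ ?_⟩
  obtain ⟨s, hs, hweyl⟩ := hweyl lam hlam
  refine ⟨s, hs, fun α hα₀ hα₁ m hm ↦ ?_⟩
  have hlam' : (0 : ℝ) < lam := by exact_mod_cast hlam
  obtain ⟨q, a, hq, hqlam, haq, hcop, hdist⟩ :=
    exists_coprime_mul_abs_sub_div_le hα₀ hα₁ (Nat.sqrt_pos.mpr hlam)
  have hbound := hweyl q a α hq hcop hqlam (by rwa [Int.cast_natCast])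
  rw [Int.cast_natCast] at hbound
  set D := (q * (1 / lam + |α - a / q|)) ^ (-(1 / 2) : ℝ)
  have hD : D ≤ (lam : ℝ) ^ (1 / 2 : ℝ) := by
    rw [← inv_inv (lam : ℝ), Real.inv_rpow (by positivity), ← Real.rpow_neg (by positivity)]
    refine Real.rpow_le_rpow_of_nonpos (by positivity) ?_ (by norm_num)
    have hq' : (1 : ℝ) ≤ q := by exact_mod_cast hq
    calc (lam : ℝ)⁻¹ ≤ 1 / lam + |α - a / q| := by rw [one_div]; linarith [abs_nonneg (α - a / q)]
      _ ≤ q * (1 / lam + |α - a / q|) := le_mul_of_one_le_left (by positivity) hq'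
  calc ‖weylSum s (gaussian lam) α‖ ^ m ≤ (B * D) ^ m := by gcongr
    _ = B ^ m * (D ^ (m - 3) * D ^ 3) := by rw [mul_pow, ← pow_add, Nat.sub_add_cancel hm]
    _ ≤ B ^ m * (((lam : ℝ) ^ (1 / 2 : ℝ)) ^ (m - 3) * arcMajorant lam α) := by
        have := rpow_neg_half_pow_three_le_arcMajorant hq hqlam haq α
        gcongr
    _ = B ^ m * (lam : ℝ) ^ (((m : ℝ) - 3) / 2) * arcMajorant lam α := by
        rw [← Real.rpow_natCast (_ ^ (1 / 2 : ℝ)), ← Real.rpow_mul hlam'.le, Nat.cast_sub hm,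
          mul_assoc, Nat.cast_ofNat, one_div_mul_eq_div]

lemma integral_mul_comp_sub_le {F v : ℝ → ℝ} (hF : Continuous F) (hF₀ : ∀ x, 0 ≤ F x)
    (hv : Continuous v) (hv₀ : ∀ x, 0 ≤ v x) {t : ℝ} (ht₀ : 0 ≤ t) (ht₁ : t ≤ 1) :
    ∫ α in (0 : ℝ)..1, F α * v (α - t) ≤ ∫ β in (-1 : ℝ)..1, F (t + β) * v β := by
  have hshift := intervalIntegral.integral_comp_sub_right (fun β ↦ F (t + β) * v β)
    (a := 0) (b := 1) t
  simp only [add_sub_cancel] at hshift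
  rw [hshift]
  refine intervalIntegral.integral_mono_interval (by linarith) (by linarith) (by linarith) ?_
    (Continuous.intervalIntegrable (by fun_prop) _ _)
  exact .of_forall fun β ↦ mul_nonneg (hF₀ _) (hv₀ _)

lemma sum_integral_norm_weylSum_sq_mul_arcProfile_le {lam : ℕ} (hlam : 1 ≤ lam) (q : ℕ) [NeZero q]
    {g : ℤ → ℝ} (hg : ∀ x, 0 ≤ g x) (s : Finset ℤ) :
    ∑ a ∈ range (q + 1), ∫ α in (0 : ℝ)..1, ‖weylSum s g α‖ ^ 2 * arcProfile lam (α - a / q) ≤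
      8 * √lam * (q * congruentPairSum q s g) := by
  have hcont := continuous_arcProfile hlam
  have hq : (0 : ℝ) < q := by exact_mod_cast NeZero.pos q
  have hpair := congruentPairSum_nonneg hg s q
  calc _ ≤ ∑ a ∈ range (q + 1),
          ∫ β in (-1 : ℝ)..1, ‖weylSum s g (a / q + β)‖ ^ 2 * arcProfile lam β := by
        refine sum_le_sum fun a ha ↦ integral_mul_comp_sub_le (F := fun α ↦ ‖weylSum s g α‖ ^ 2)
          (by fun_prop) (fun _ ↦ by positivity) hcont (arcProfile_nonneg lam) (by positivity) ?_
        rw [div_le_one hq]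
        exact_mod_cast Nat.lt_succ_iff.mp (mem_range.mp ha)
    _ = ∫ β in (-1 : ℝ)..1,
          (∑ a ∈ range (q + 1), ‖weylSum s g (a / q + β)‖ ^ 2) * arcProfile lam β := by
        simp_rw [sum_mul]
        exact (intervalIntegral.integral_finsetSum fun a _ ↦
          Continuous.intervalIntegrable (by fun_prop) _ _).symm
    _ ≤ ∫ β in (-1 : ℝ)..1, 2 * (q * congruentPairSum q s g) * arcProfile lam β := by
        refine intervalIntegral.integral_mono (by norm_num)
          (Continuous.intervalIntegrable (by fun_prop) _ _)
          (Continuous.intervalIntegrable (by fun_prop) _ _) fun β ↦ ?_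
        exact mul_le_mul_of_nonneg_right (sum_range_succ_norm_weylSum_sq_le hg s q β)
          (arcProfile_nonneg lam β)
    _ ≤ 2 * (q * congruentPairSum q s g) * (4 * √lam) := by
        rw [intervalIntegral.integral_const_mul]
        have := integral_arcProfile_le hlam
        gcongr
    _ = 8 * √lam * (q * congruentPairSum q s g) := by ring

lemma sum_rpow_mul_congruentPairSum (lam : ℕ) (s : Finset ℤ) (g : ℤ → ℝ) :
    ∑ q ∈ Icc 1 (Nat.sqrt lam), (q : ℝ) ^ (-(1 / 2) : ℝ) * congruentPairSum q s g =
      ∑ x ∈ s, ∑ y ∈ s, g x * g y * truncatedDivisorSum lam (x ^ 2 - y ^ 2) := by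
  simp only [congruentPairSum, truncatedDivisorSum, mul_sum, sum_filter]
  rw [sum_comm]
  refine sum_congr rfl fun x _ ↦ ?_
  rw [sum_comm]
  refine sum_congr rfl fun y _ ↦ sum_congr rfl fun q _ ↦ ?_
  split_ifs <;> ring

lemma integral_norm_weylSum_sq_mul_arcMajorant_le {lam : ℕ} (hlam : 1 ≤ lam) {g : ℤ → ℝ}
    (hg : ∀ x, 0 ≤ g x) (s : Finset ℤ) :
    ∫ α in (0 : ℝ)..1, ‖weylSum s g α‖ ^ 2 * arcMajorant lam α ≤
      8 * √lam * ∑ x ∈ s, ∑ y ∈ s, g x * g y * truncatedDivisorSum lam (x ^ 2 - y ^ 2) := by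
  have hcont := continuous_arcProfile hlam
  calc _ = ∑ q ∈ Icc 1 (Nat.sqrt lam), (q : ℝ) ^ (-(3 / 2) : ℝ) * ∑ a ∈ range (q + 1),
          ∫ α in (0 : ℝ)..1, ‖weylSum s g α‖ ^ 2 * arcProfile lam (α - a / q) := by
        simp_rw [arcMajorant, mul_sum, ← intervalIntegral.integral_const_mul]
        rw [intervalIntegral.integral_finsetSum fun q _ ↦
          Continuous.intervalIntegrable (by fun_prop) _ _]
        refine sum_congr rfl fun q _ ↦ ?_
        rw [intervalIntegral.integral_finsetSum fun a _ ↦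
          Continuous.intervalIntegrable (by fun_prop) _ _]
        simp only [mul_left_comm]
    _ ≤ ∑ q ∈ Icc 1 (Nat.sqrt lam),
          8 * √lam * ((q : ℝ) ^ (-(1 / 2) : ℝ) * congruentPairSum q s g) := by
        refine sum_le_sum fun q hq ↦ ?_
        have hq₁ := (mem_Icc.mp hq).1
        have : NeZero q := ⟨by lia⟩
        have hpow : (q : ℝ) ^ (-(1 / 2) : ℝ) = (q : ℝ) ^ (-(3 / 2) : ℝ) * q := by
          rw [← Real.rpow_add_one (by exact_mod_cast NeZero.ne q)]
          norm_num
        rw [hpow]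
        exact (mul_le_mul_of_nonneg_left
          (sum_integral_norm_weylSum_sq_mul_arcProfile_le hlam q hg s)
          (by positivity)).trans_eq (by ring)
    _ = _ := by rw [← mul_sum, sum_rpow_mul_congruentPairSum]

/-! ### Divisor sums -/

/-- The divisor sum `∑ d ∣ u, d^(-1/2)`. -/
def divisorSum (u : ℕ) : ℝ := ∑ d ∈ u.divisors, (d : ℝ) ^ (-(1 / 2) : ℝ)

lemma divisorSum_nonneg (u : ℕ) : 0 ≤ divisorSum u := sum_nonneg fun _ _ ↦ by positivity

lemma divisorSum_mul_le (u v : ℕ) : divisorSum (u * v) ≤ divisorSum u * divisorSum v := by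
  have hmul (p : ℕ × ℕ) : (p.1 : ℝ) ^ (-(1 / 2) : ℝ) * (p.2 : ℝ) ^ (-(1 / 2) : ℝ) =
      ((p.1 * p.2 : ℕ) : ℝ) ^ (-(1 / 2) : ℝ) := by
    push_cast
    rw [Real.mul_rpow (by positivity) (by positivity)]
  rw [divisorSum, divisorSum, divisorSum, sum_mul_sum, ← sum_product', Nat.divisors_mul,
    ← image_mul_product]
  simp only [hmul]
  exact sum_image_le_of_nonneg (f := fun d : ℕ ↦ (d : ℝ) ^ (-(1 / 2) : ℝ)) fun _ _ ↦ by positivity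

lemma sum_sum_divisors (N : ℕ) (F : ℕ → ℕ → ℝ) :
    ∑ u ∈ Icc 1 N, ∑ d ∈ u.divisors, F d u =
      ∑ d ∈ Icc 1 N, ∑ v ∈ Icc 1 (N / d), F d (d * v) := by
  rw [sum_sigma', sum_sigma']
  symm
  refine sum_nbij' (fun p ↦ ⟨p.1 * p.2, p.1⟩) (fun p ↦ ⟨p.2, p.1 / p.2⟩) ?_ ?_ ?_ ?_ ?_
  · rintro ⟨d, v⟩ h
    obtain ⟨⟨hd, -⟩, hv, hvN⟩ := by simpa only [mem_sigma, mem_Icc] using h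
    have hdv : d * v ≤ N := mul_comm d v ▸ (Nat.le_div_iff_mul_le hd).mp hvN
    simpa only [mem_sigma, mem_Icc, Nat.mem_divisors] using
      ⟨⟨Nat.mul_pos hd hv, hdv⟩, dvd_mul_right d v, (Nat.mul_pos hd hv).ne'⟩
  · rintro ⟨u, d⟩ h
    obtain ⟨⟨hu, huN⟩, hdu, -⟩ := by simpa only [mem_sigma, mem_Icc, Nat.mem_divisors] using h
    have hd := Nat.pos_of_dvd_of_pos hdu hu
    have hdle := Nat.le_of_dvd hu hdu
    simpa only [mem_sigma, mem_Icc] using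
      ⟨⟨hd, hdle.trans huN⟩, Nat.div_pos hdle hd, Nat.div_le_div_right huN⟩
  · rintro ⟨d, v⟩ h
    simp only [mem_sigma, mem_Icc] at h
    simp only [Nat.mul_div_cancel_left v h.1.1]
  · rintro ⟨u, d⟩ h
    simp only [mem_sigma, Nat.mem_divisors] at h
    simp only [Nat.mul_div_cancel' h.2.1]
  · exact fun _ _ ↦ rfl

lemma sum_divisorSum_pow_succ_mul_rpow_le (k N : ℕ) (s : ℝ) :
    ∑ u ∈ Icc 1 N, divisorSum u ^ (k + 1) * (u : ℝ) ^ s ≤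
      ∑ d ∈ Icc 1 N, (d : ℝ) ^ (-(1 / 2) : ℝ) * (divisorSum d ^ k * (d : ℝ) ^ s) *
        ∑ v ∈ Icc 1 (N / d), divisorSum v ^ k * (v : ℝ) ^ s := by
  have hexpand (u : ℕ) : divisorSum u ^ (k + 1) * (u : ℝ) ^ s =
      ∑ d ∈ u.divisors, (d : ℝ) ^ (-(1 / 2) : ℝ) * (divisorSum u ^ k * (u : ℝ) ^ s) := by
    rw [← sum_mul, ← divisorSum]
    ring
  simp only [hexpand]
  rw [sum_sum_divisors N fun d u ↦ (d : ℝ) ^ (-(1 / 2) : ℝ) * (divisorSum u ^ k * (u : ℝ) ^ s)]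
  simp only [mul_sum]
  refine sum_le_sum fun d _ ↦ sum_le_sum fun v _ ↦ ?_
  have hpow : divisorSum (d * v) ^ k ≤ divisorSum d ^ k * divisorSum v ^ k := by
    rw [← mul_pow]
    exact pow_le_pow_left₀ (divisorSum_nonneg _) (divisorSum_mul_le d v) k
  rw [Nat.cast_mul, Real.mul_rpow d.cast_nonneg v.cast_nonneg, mul_assoc]
  refine mul_le_mul_of_nonneg_left ?_ (by positivity)
  exact (mul_le_mul_of_nonneg_right hpow (by positivity)).trans_eq (by ring)

lemma exists_sum_divisorSum_pow_mul_rpow_le (k : ℕ) :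
    ∃ C : ℝ, 0 ≤ C ∧ ∀ N : ℕ, ∑ d ∈ Icc 1 N, divisorSum d ^ k * (d : ℝ) ^ (-(3 / 2) : ℝ) ≤ C := by
  induction k with
  | zero =>
    have hsum : Summable fun d : ℕ ↦ (d : ℝ) ^ (-(3 / 2) : ℝ) :=
      Real.summable_nat_rpow.mpr (by norm_num)
    refine ⟨∑' d : ℕ, (d : ℝ) ^ (-(3 / 2) : ℝ), tsum_nonneg fun _ ↦ by positivity, fun N ↦ ?_⟩
    simpa only [pow_zero, one_mul] using hsum.sum_le_tsum _ fun _ _ ↦ by positivity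
  | succ k ih =>
    obtain ⟨C, hC, hbound⟩ := ih
    refine ⟨C * C, by positivity, fun N ↦ ?_⟩
    calc ∑ d ∈ Icc 1 N, divisorSum d ^ (k + 1) * (d : ℝ) ^ (-(3 / 2) : ℝ)
        ≤ ∑ d ∈ Icc 1 N, (d : ℝ) ^ (-(1 / 2) : ℝ) *
            (divisorSum d ^ k * (d : ℝ) ^ (-(3 / 2) : ℝ)) *
            ∑ v ∈ Icc 1 (N / d), divisorSum v ^ k * (v : ℝ) ^ (-(3 / 2) : ℝ) :=
          sum_divisorSum_pow_succ_mul_rpow_le k N _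
      _ ≤ ∑ d ∈ Icc 1 N, divisorSum d ^ k * (d : ℝ) ^ (-(3 / 2) : ℝ) * C := by
          refine sum_le_sum fun d hd ↦ ?_
          have hterm : 0 ≤ divisorSum d ^ k * (d : ℝ) ^ (-(3 / 2) : ℝ) :=
            mul_nonneg (pow_nonneg (divisorSum_nonneg d) k) (by positivity)
          refine mul_le_mul (mul_le_of_le_one_left hterm ?_) (hbound _) ?_ hterm
          · exact Real.rpow_le_one_of_one_le_of_nonpos (by exact_mod_cast (mem_Icc.mp hd).1)
              (by norm_num)
          · exact sum_nonneg fun v _ ↦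
              mul_nonneg (pow_nonneg (divisorSum_nonneg v) k) (by positivity)
      _ ≤ C * C := by
          rw [← sum_mul]
          exact mul_le_mul_of_nonneg_right (hbound N) hC

lemma exists_sum_divisorSum_pow_le (k : ℕ) :
    ∃ C : ℝ, 0 ≤ C ∧ ∀ N : ℕ, ∑ d ∈ Icc 1 N, divisorSum d ^ k ≤ C * N := by
  induction k with
  | zero => exact ⟨1, zero_le_one, fun N ↦ by simp⟩
  | succ k ih =>
    obtain ⟨C, hC, hbound⟩ := ih
    obtain ⟨A, hA, hweighted⟩ := exists_sum_divisorSum_pow_mul_rpow_le k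
    refine ⟨C * A, by positivity, fun N ↦ ?_⟩
    have hstep := sum_divisorSum_pow_succ_mul_rpow_le k N 0
    simp only [Real.rpow_zero, mul_one] at hstep
    calc ∑ d ∈ Icc 1 N, divisorSum d ^ (k + 1)
        ≤ ∑ d ∈ Icc 1 N, (d : ℝ) ^ (-(1 / 2) : ℝ) * divisorSum d ^ k *
            ∑ v ∈ Icc 1 (N / d), divisorSum v ^ k := hstep
      _ ≤ ∑ d ∈ Icc 1 N, (d : ℝ) ^ (-(1 / 2) : ℝ) * divisorSum d ^ k * (C * (N / d)) := by
          refine sum_le_sum fun d _ ↦ mul_le_mul_of_nonneg_left ?_ ?_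
          · exact (hbound _).trans (mul_le_mul_of_nonneg_left Nat.cast_div_le hC)
          · exact mul_nonneg (by positivity) (pow_nonneg (divisorSum_nonneg d) k)
      _ = (∑ d ∈ Icc 1 N, divisorSum d ^ k * (d : ℝ) ^ (-(3 / 2) : ℝ)) * (C * N) := by
          rw [sum_mul]
          refine sum_congr rfl fun d hd ↦ ?_
          have hd : (d : ℝ) ≠ 0 := by exact_mod_cast Nat.one_le_iff_ne_zero.mp (mem_Icc.mp hd).1
          rw [show (-(3 / 2) : ℝ) = -(1 / 2) - 1 by norm_num, Real.rpow_sub_one hd]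
          ring
      _ ≤ A * (C * N) := mul_le_mul_of_nonneg_right (hweighted N) (by positivity)
      _ = C * A * N := by ring

lemma truncatedDivisorSum_nonneg (lam : ℕ) (m : ℤ) : 0 ≤ truncatedDivisorSum lam m :=
  sum_nonneg fun _ _ ↦ by positivity

lemma truncatedDivisorSum_le_divisorSum (lam : ℕ) {m : ℤ} (hm : m ≠ 0) :
    truncatedDivisorSum lam m ≤ divisorSum m.natAbs := by
  refine sum_le_sum_of_subset_of_nonneg (fun q hq ↦ ?_) fun _ _ _ ↦ by positivity
  exact Nat.mem_divisors.mpr ⟨Int.natCast_dvd.mp (mem_filter.mp hq).2, Int.natAbs_ne_zero.mpr hm⟩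

lemma sum_rpow_neg_half_le (N : ℕ) : ∑ q ∈ Icc 1 N, (q : ℝ) ^ (-(1 / 2) : ℝ) ≤ 2 * √N := by
  induction N with
  | zero => simp
  | succ N ih =>
    rw [sum_Icc_succ_top (by lia)]
    have hpos : (0 : ℝ) < (N + 1 : ℕ) := by positivity
    have hmono : √(N : ℝ) ≤ √(N + 1 : ℕ) := Real.sqrt_le_sqrt (by push_cast; linarith)
    have hstep : (√(N + 1 : ℕ))⁻¹ ≤ 2 * (√(N + 1 : ℕ) - √N) := by
      rw [inv_le_iff_one_le_mul₀ (Real.sqrt_pos.mpr hpos)]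
      have hsq := Real.sq_sqrt (Nat.cast_nonneg (α := ℝ) N)
      have hsq' := Real.sq_sqrt hpos.le
      push_cast at hsq' hmono ⊢
      nlinarith [Real.sqrt_nonneg (N : ℝ)]
    rw [Real.rpow_neg hpos.le, ← Real.sqrt_eq_rpow]
    linarith

lemma truncatedDivisorSum_zero_le (lam : ℕ) :
    truncatedDivisorSum lam 0 ≤ 2 * (lam : ℝ) ^ (1 / 4 : ℝ) := by
  have hroot : (lam : ℝ) ^ (1 / 4 : ℝ) = √(√lam) := by
    rw [Real.sqrt_eq_rpow, Real.sqrt_eq_rpow, ← Real.rpow_mul lam.cast_nonneg]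
    norm_num
  simp only [truncatedDivisorSum, dvd_zero, filter_true]
  rw [hroot]
  refine (sum_rpow_neg_half_le _).trans ?_
  gcongr
  exact Real.nat_sqrt_le_real_sqrt

lemma sum_natAbs_le (M : ℕ) {φ : ℕ → ℝ} (hφ : ∀ u, 0 ≤ φ u) :
    ∑ u ∈ Icc (-(M : ℤ)) M with u ≠ 0, φ u.natAbs ≤ 2 * ∑ u ∈ Icc 1 M, φ u := by
  have hmaps : ∀ u ∈ {u ∈ Icc (-(M : ℤ)) M | u ≠ 0}, u.natAbs ∈ Icc 1 M := by
    intro u hu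
    simp only [mem_filter, mem_Icc] at hu ⊢
    lia
  rw [← sum_fiberwise_of_maps_to hmaps, mul_sum]
  refine sum_le_sum fun u _ ↦ ?_
  rw [sum_congr rfl fun i hi ↦ by rw [(mem_filter.mp hi).2], sum_const, nsmul_eq_mul]
  refine mul_le_mul_of_nonneg_right ?_ (hφ u)
  have hfiber : {i ∈ {u ∈ Icc (-(M : ℤ)) M | u ≠ 0} | i.natAbs = u} ⊆ {(u : ℤ), -(u : ℤ)} := by
    intro i hi
    have := (mem_filter.mp hi).2
    simp only [mem_insert, mem_singleton]
    lia
  exact_mod_cast (card_le_card hfiber).trans card_le_two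

/- The change of variables `(x, y) ↦ (x - y, x + y)` decouples the two factors of `x² - y²`. -/
lemma sum_mul_natAbs_sub_natAbs_add_le (N : ℕ) {φ : ℕ → ℝ} (hφ : ∀ u, 0 ≤ φ u) :
    ∑ p ∈ Icc (-(N : ℤ)) N ×ˢ Icc (-(N : ℤ)) N with p.1 ^ 2 ≠ p.2 ^ 2,
      φ (p.1 - p.2).natAbs * φ (p.1 + p.2).natAbs ≤ (2 * ∑ u ∈ Icc 1 (2 * N), φ u) ^ 2 := by
  set J := {u ∈ Icc (-((2 * N : ℕ) : ℤ)) ((2 * N : ℕ) : ℤ) | u ≠ 0} with hJ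
  let T : ℤ × ℤ ↪ ℤ × ℤ := ⟨fun p ↦ (p.1 - p.2, p.1 + p.2), fun p r h ↦ by
    simp only [Prod.mk.injEq] at h
    ext <;> lia⟩
  have hsub : {p ∈ Icc (-(N : ℤ)) N ×ˢ Icc (-(N : ℤ)) N | p.1 ^ 2 ≠ p.2 ^ 2}.map T ⊆ J ×ˢ J := by
    intro r hr
    obtain ⟨p, hp, rfl⟩ := mem_map.mp hr
    simp only [mem_filter, mem_product, mem_Icc] at hp
    have hne : (p.1 - p.2) * (p.1 + p.2) ≠ 0 := by
      rw [mul_comm, ← sq_sub_sq]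
      exact sub_ne_zero.mpr hp.2
    obtain ⟨hsub₀, hadd₀⟩ := mul_ne_zero_iff.mp hne
    change (p.1 - p.2, p.1 + p.2) ∈ J ×ˢ J
    simp only [hJ, mem_filter, mem_product, mem_Icc]
    lia
  calc ∑ p ∈ Icc (-(N : ℤ)) N ×ˢ Icc (-(N : ℤ)) N with p.1 ^ 2 ≠ p.2 ^ 2,
        φ (p.1 - p.2).natAbs * φ (p.1 + p.2).natAbs
      ≤ ∑ r ∈ J ×ˢ J, φ r.1.natAbs * φ r.2.natAbs := by
        refine le_of_eq_of_le (sum_map _ T fun r ↦ φ r.1.natAbs * φ r.2.natAbs).symm ?_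
        exact sum_le_sum_of_subset_of_nonneg hsub fun r _ _ ↦ mul_nonneg (hφ _) (hφ _)
    _ = (∑ u ∈ J, φ u.natAbs) ^ 2 := by rw [sq, sum_mul_sum, sum_product]
    _ ≤ (2 * ∑ u ∈ Icc 1 (2 * N), φ u) ^ 2 :=
        pow_le_pow_left₀ (sum_nonneg fun u _ ↦ hφ _) (sum_natAbs_le (2 * N) hφ) 2

lemma exists_sum_truncatedDivisorSum_pow_three_le : ∃ C : ℝ, 0 ≤ C ∧ ∀ lam : ℕ,
    ∑ p ∈ rootInterval lam ×ˢ rootInterval lam with p.1 ^ 2 ≠ p.2 ^ 2,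
      truncatedDivisorSum lam (p.1 ^ 2 - p.2 ^ 2) ^ 3 ≤ C * lam := by
  obtain ⟨C, _, hbound⟩ := exists_sum_divisorSum_pow_le 3
  refine ⟨16 * C ^ 2, by positivity, fun lam ↦ ?_⟩
  set N := Nat.sqrt lam
  calc ∑ p ∈ rootInterval lam ×ˢ rootInterval lam with p.1 ^ 2 ≠ p.2 ^ 2,
        truncatedDivisorSum lam (p.1 ^ 2 - p.2 ^ 2) ^ 3
      ≤ ∑ p ∈ rootInterval lam ×ˢ rootInterval lam with p.1 ^ 2 ≠ p.2 ^ 2,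
          divisorSum (p.1 - p.2).natAbs ^ 3 * divisorSum (p.1 + p.2).natAbs ^ 3 := by
        refine sum_le_sum fun p hp ↦ ?_
        have hne : p.1 ^ 2 - p.2 ^ 2 ≠ 0 := sub_ne_zero.mpr (mem_filter.mp hp).2
        rw [← mul_pow]
        refine pow_le_pow_left₀ (truncatedDivisorSum_nonneg _ _) ?_ 3
        refine (truncatedDivisorSum_le_divisorSum lam hne).trans ?_
        rw [sq_sub_sq, mul_comm, Int.natAbs_mul]
        exact divisorSum_mul_le _ _
    _ ≤ (2 * ∑ u ∈ Icc 1 (2 * N), divisorSum u ^ 3) ^ 2 :=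
        sum_mul_natAbs_sub_natAbs_add_le N fun u ↦ pow_nonneg (divisorSum_nonneg u) 3
    _ ≤ (2 * (C * (2 * N : ℕ))) ^ 2 := by
        have hsum : 0 ≤ ∑ u ∈ Icc 1 (2 * N), divisorSum u ^ 3 :=
          sum_nonneg fun u _ ↦ pow_nonneg (divisorSum_nonneg u) 3
        gcongr
        exact hbound _
    _ = 16 * C ^ 2 * ((N * N : ℕ) : ℝ) := by
        push_cast
        ring
    _ ≤ 16 * C ^ 2 * lam := by
        gcongr
        exact Nat.sqrt_le lam

/-! ### Averages over pairs of coordinates -/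

/-- The `ℓ^{3/2}` norm on the finite set `s` of a nonnegative function `g`. -/
def threeHalvesNorm (s : Finset ℤ) (g : ℤ → ℝ) : ℝ :=
  (∑ x ∈ s, g x ^ (3 / 2 : ℝ)) ^ (2 / 3 : ℝ)

section

variable {g g₁ g₂ : ℤ → ℝ} {s : Finset ℤ} {lam : ℕ}

lemma sum_rpow_three_halves_nonneg (s : Finset ℤ) (hg : ∀ x, 0 ≤ g x) :
    0 ≤ ∑ x ∈ s, g x ^ (3 / 2 : ℝ) := sum_nonneg fun x _ ↦ Real.rpow_nonneg (hg x) _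

lemma threeHalvesNorm_nonneg (s : Finset ℤ) (hg : ∀ x, 0 ≤ g x) : 0 ≤ threeHalvesNorm s g :=
  Real.rpow_nonneg (sum_rpow_three_halves_nonneg s hg) _

lemma sum_sq_le_threeHalvesNorm_sq (s : Finset ℤ) (hg : ∀ x, 0 ≤ g x) :
    ∑ x ∈ s, g x ^ 2 ≤ threeHalvesNorm s g ^ 2 := by
  set N := threeHalvesNorm s g with hN
  have hN₀ : 0 ≤ N := threeHalvesNorm_nonneg s hg
  have hU₀ := sum_rpow_three_halves_nonneg s hg
  have hNpow : N ^ (3 / 2 : ℝ) = ∑ x ∈ s, g x ^ (3 / 2 : ℝ) := by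
    rw [hN, threeHalvesNorm, ← Real.rpow_mul hU₀]
    norm_num
  have hsplit {a : ℝ} (ha : 0 ≤ a) : a ^ 2 = a ^ (3 / 2 : ℝ) * a ^ (1 / 2 : ℝ) := by
    rw [← Real.rpow_add_of_nonneg ha (by norm_num) (by norm_num), ← Real.rpow_natCast]
    norm_num
  have hle : ∀ x ∈ s, g x ≤ N := by
    intro x hx
    refine (Real.rpow_le_rpow_iff (hg x) hN₀ (by norm_num : (0 : ℝ) < 3 / 2)).mp ?_
    rw [hNpow]
    exact single_le_sum (f := fun x ↦ g x ^ (3 / 2 : ℝ))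
      (fun x _ ↦ Real.rpow_nonneg (hg x) _) hx
  calc ∑ x ∈ s, g x ^ 2 ≤ ∑ x ∈ s, g x ^ (3 / 2 : ℝ) * N ^ (1 / 2 : ℝ) := by
        refine sum_le_sum fun x hx ↦ ?_
        rw [hsplit (hg x)]
        exact mul_le_mul_of_nonneg_left (Real.rpow_le_rpow (hg x) (hle x hx) (by norm_num))
          (Real.rpow_nonneg (hg x) _)
    _ = N ^ 2 := by rw [← sum_mul, ← hNpow, hsplit hN₀]

lemma sum_mul_with_sq_eq_sq_le (s : Finset ℤ) (g : ℤ → ℝ) :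
    ∑ p ∈ s ×ˢ s with p.1 ^ 2 = p.2 ^ 2, g p.1 * g p.2 ≤ 2 * ∑ x ∈ s, g x ^ 2 := by
  have hcard (x : ℤ) : #{y ∈ s | x ^ 2 = y ^ 2} ≤ 2 := by
    refine (card_le_card fun y hy ↦ ?_).trans (card_le_two (a := x) (b := -x))
    have := sq_eq_sq_iff_eq_or_eq_neg.mp (mem_filter.mp hy).2.symm
    simpa only [mem_insert, mem_singleton] using this
  have hfst : ∑ p ∈ s ×ˢ s with p.1 ^ 2 = p.2 ^ 2, g p.1 ^ 2 ≤ 2 * ∑ x ∈ s, g x ^ 2 := by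
    rw [sum_filter, sum_product, mul_sum]
    refine sum_le_sum fun x _ ↦ ?_
    simp only [← sum_filter, sum_const, nsmul_eq_mul]
    exact mul_le_mul_of_nonneg_right (by exact_mod_cast hcard x) (sq_nonneg _)
  have hsnd : ∑ p ∈ s ×ˢ s with p.1 ^ 2 = p.2 ^ 2, g p.2 ^ 2 =
      ∑ p ∈ s ×ˢ s with p.1 ^ 2 = p.2 ^ 2, g p.1 ^ 2 := by
    simp only [sum_filter]
    rw [sum_product, sum_product_right]
    simp only [eq_comm]
  calc ∑ p ∈ s ×ˢ s with p.1 ^ 2 = p.2 ^ 2, g p.1 * g p.2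
      ≤ ∑ p ∈ s ×ˢ s with p.1 ^ 2 = p.2 ^ 2, (g p.1 ^ 2 + g p.2 ^ 2) / 2 :=
        sum_le_sum fun p _ ↦ by linarith [two_mul_le_add_sq (g p.1) (g p.2)]
    _ ≤ 2 * ∑ x ∈ s, g x ^ 2 := by
        rw [← sum_div, sum_add_distrib, hsnd]
        linarith

lemma sum_mul_mul_truncatedDivisorSum_diag_le (hlam : 1 ≤ lam) (s : Finset ℤ)
    (hg : ∀ x, 0 ≤ g x) :
    ∑ p ∈ s ×ˢ s with p.1 ^ 2 = p.2 ^ 2, g p.1 * g p.2 * truncatedDivisorSum lam (p.1 ^ 2 - p.2 ^ 2)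
      ≤ 4 * (lam : ℝ) ^ (1 / 3 : ℝ) * threeHalvesNorm s g ^ 2 := by
  have hlam' : (1 : ℝ) ≤ lam := by exact_mod_cast hlam
  have hroot : (lam : ℝ) ^ (1 / 4 : ℝ) ≤ (lam : ℝ) ^ (1 / 3 : ℝ) :=
    Real.rpow_le_rpow_of_exponent_le hlam' (by norm_num)
  calc ∑ p ∈ s ×ˢ s with p.1 ^ 2 = p.2 ^ 2,
        g p.1 * g p.2 * truncatedDivisorSum lam (p.1 ^ 2 - p.2 ^ 2)
      = (∑ p ∈ s ×ˢ s with p.1 ^ 2 = p.2 ^ 2, g p.1 * g p.2) * truncatedDivisorSum lam 0 := by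
        rw [sum_mul]
        exact sum_congr rfl fun p hp ↦ by rw [(mem_filter.mp hp).2, sub_self]
    _ ≤ (2 * threeHalvesNorm s g ^ 2) * (2 * (lam : ℝ) ^ (1 / 3 : ℝ)) := by
        refine mul_le_mul ?_ ?_ (truncatedDivisorSum_nonneg _ _) (by positivity)
        · linarith [sum_mul_with_sq_eq_sq_le s g, sum_sq_le_threeHalvesNorm_sq s hg]
        · linarith [truncatedDivisorSum_zero_le lam]
    _ = 4 * (lam : ℝ) ^ (1 / 3 : ℝ) * threeHalvesNorm s g ^ 2 := by ring

lemma sum_mul_mul_le_threeHalvesNorm_sq_mul (s : Finset ℤ) (t : Finset (ℤ × ℤ)) (ht : t ⊆ s ×ˢ s)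
    (hg : ∀ x, 0 ≤ g x) {D : ℤ × ℤ → ℝ} (hD : ∀ p, 0 ≤ D p) :
    ∑ p ∈ t, g p.1 * g p.2 * D p ≤ threeHalvesNorm s g ^ 2 * (∑ p ∈ t, D p ^ 3) ^ (1 / 3 : ℝ) := by
  have hU₀ := sum_rpow_three_halves_nonneg s hg
  have hprod : ∑ p ∈ t, (g p.1 * g p.2) ^ (3 / 2 : ℝ) ≤ (∑ x ∈ s, g x ^ (3 / 2 : ℝ)) ^ 2 := by
    rw [sq, sum_mul_sum, ← sum_product']
    simp only [Real.mul_rpow (hg _) (hg _)]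
    exact sum_le_sum_of_subset_of_nonneg ht fun p _ _ ↦
      mul_nonneg (Real.rpow_nonneg (hg _) _) (Real.rpow_nonneg (hg _) _)
  refine (Real.inner_le_Lp_mul_Lq_of_nonneg t (f := fun p ↦ g p.1 * g p.2) (g := D) (p := 3 / 2)
    (q := 3) (by constructor <;> norm_num) (fun p _ ↦ mul_nonneg (hg _) (hg _))
    fun p _ ↦ hD p).trans ?_
  have hD₀ : 0 ≤ ∑ p ∈ t, D p ^ 3 := sum_nonneg fun p _ ↦ pow_nonneg (hD p) 3
  simp only [Real.rpow_ofNat]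
  refine mul_le_mul_of_nonneg_right ?_ (Real.rpow_nonneg hD₀ _)
  rw [threeHalvesNorm, Real.rpow_pow_comm hU₀, one_div_div]
  refine Real.rpow_le_rpow ?_ hprod (by norm_num)
  exact sum_nonneg fun p _ ↦ Real.rpow_nonneg (mul_nonneg (hg _) (hg _)) _

lemma exists_sum_mul_mul_truncatedDivisorSum_le : ∃ C : ℝ, 0 ≤ C ∧ ∀ lam : ℕ, 1 ≤ lam →
    ∀ g : ℤ → ℝ, (∀ x, 0 ≤ g x) →
    ∑ x ∈ rootInterval lam, ∑ y ∈ rootInterval lam,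
      g x * g y * truncatedDivisorSum lam (x ^ 2 - y ^ 2) ≤
        C * (lam : ℝ) ^ (1 / 3 : ℝ) * threeHalvesNorm (rootInterval lam) g ^ 2 := by
  obtain ⟨C, hC, hcube⟩ := exists_sum_truncatedDivisorSum_pow_three_le
  refine ⟨4 + C ^ (1 / 3 : ℝ), by positivity, fun lam hlam g hg ↦ ?_⟩
  set I := rootInterval lam
  have hoff : ∑ p ∈ I ×ˢ I with p.1 ^ 2 ≠ p.2 ^ 2,
      g p.1 * g p.2 * truncatedDivisorSum lam (p.1 ^ 2 - p.2 ^ 2) ≤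
        C ^ (1 / 3 : ℝ) * (lam : ℝ) ^ (1 / 3 : ℝ) * threeHalvesNorm I g ^ 2 := by
    refine (sum_mul_mul_le_threeHalvesNorm_sq_mul I _ (filter_subset _ _) hg
      fun p ↦ truncatedDivisorSum_nonneg lam (p.1 ^ 2 - p.2 ^ 2)).trans ?_
    rw [← Real.mul_rpow hC lam.cast_nonneg, mul_comm]
    refine mul_le_mul_of_nonneg_right (Real.rpow_le_rpow ?_ (hcube lam) (by norm_num))
      (sq_nonneg _)
    exact sum_nonneg fun p _ ↦ pow_nonneg (truncatedDivisorSum_nonneg _ _) 3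
  rw [← sum_product' (f := fun x y ↦ g x * g y * truncatedDivisorSum lam (x ^ 2 - y ^ 2)),
    ← sum_filter_add_sum_filter_not (I ×ˢ I) fun p ↦ p.1 ^ 2 = p.2 ^ 2, add_mul, add_mul]
  exact add_le_add (sum_mul_mul_truncatedDivisorSum_diag_le hlam I hg) hoff

lemma sq_integral_mul_mul_le {f g w : ℝ → ℝ} (hf : Continuous f) (hg : Continuous g)
    (hw : Continuous w) (hw₀ : ∀ x, 0 ≤ w x) {a b : ℝ} (hab : a ≤ b) :
    (∫ x in a..b, f x * g x * w x) ^ 2 ≤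
      (∫ x in a..b, f x ^ 2 * w x) * ∫ x in a..b, g x ^ 2 * w x := by
  have hdiscrim : discrim (∫ x in a..b, f x ^ 2 * w x) (2 * ∫ x in a..b, f x * g x * w x)
      (∫ x in a..b, g x ^ 2 * w x) ≤ 0 := by
    refine discrim_le_zero fun t ↦ ?_
    have hexpand : ∫ x in a..b, (t * f x + g x) ^ 2 * w x =
        (∫ x in a..b, f x ^ 2 * w x) * (t * t) + (2 * ∫ x in a..b, f x * g x * w x) * t +
          ∫ x in a..b, g x ^ 2 * w x := by
      rw [← intervalIntegral.integral_const_mul, ← intervalIntegral.integral_mul_const,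
        ← intervalIntegral.integral_mul_const, ← intervalIntegral.integral_add,
        ← intervalIntegral.integral_add]
      · exact intervalIntegral.integral_congr fun x _ ↦ by ring
      all_goals exact Continuous.intervalIntegrable (by fun_prop) _ _
    rw [← hexpand]
    exact intervalIntegral.integral_nonneg hab fun x _ ↦ mul_nonneg (sq_nonneg _) (hw₀ x)
  rw [discrim] at hdiscrim
  linarith

lemma exists_integral_norm_weylSum_mul_arcMajorant_le : ∃ C : ℝ, 0 ≤ C ∧ ∀ lam : ℕ, 1 ≤ lam →
    ∀ g₁ g₂ : ℤ → ℝ, (∀ x, 0 ≤ g₁ x) → (∀ x, 0 ≤ g₂ x) →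
    ∫ α in (0 : ℝ)..1, ‖weylSum (rootInterval lam) g₁ α‖ * ‖weylSum (rootInterval lam) g₂ α‖ *
      arcMajorant lam α ≤ C * (lam : ℝ) ^ (5 / 6 : ℝ) *
        (threeHalvesNorm (rootInterval lam) g₁ * threeHalvesNorm (rootInterval lam) g₂) := by
  obtain ⟨C, hC, hquad⟩ := exists_sum_mul_mul_truncatedDivisorSum_le
  refine ⟨8 * C, by positivity, fun lam hlam g₁ g₂ hg₁ hg₂ ↦ ?_⟩
  set I := rootInterval lam
  set A := 8 * C * (lam : ℝ) ^ (5 / 6 : ℝ) with hA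
  have hA₀ : 0 ≤ A := by positivity
  have hcont := continuous_arcMajorant hlam
  have hexp : (lam : ℝ) ^ (5 / 6 : ℝ) = √lam * (lam : ℝ) ^ (1 / 3 : ℝ) := by
    rw [Real.sqrt_eq_rpow, ← Real.rpow_add (by exact_mod_cast hlam)]
    norm_num
  have hsq {g : ℤ → ℝ} (hg : ∀ x, 0 ≤ g x) :
      ∫ α in (0 : ℝ)..1, ‖weylSum I g α‖ ^ 2 * arcMajorant lam α ≤ A * threeHalvesNorm I g ^ 2 := by
    refine (integral_norm_weylSum_sq_mul_arcMajorant_le hlam hg I).trans ?_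
    rw [hA, hexp]
    exact (mul_le_mul_of_nonneg_left (hquad lam hlam g hg) (by positivity)).trans_eq (by ring)
  have hsq₀ (g : ℤ → ℝ) : 0 ≤ ∫ α in (0 : ℝ)..1, ‖weylSum I g α‖ ^ 2 * arcMajorant lam α :=
    intervalIntegral.integral_nonneg zero_le_one fun α _ ↦
      mul_nonneg (sq_nonneg _) (arcMajorant_nonneg lam α)
  refine le_of_sq_le_sq ?_ (mul_nonneg hA₀
    (mul_nonneg (threeHalvesNorm_nonneg I hg₁) (threeHalvesNorm_nonneg I hg₂)))
  calc _ ≤ _ := sq_integral_mul_mul_le (continuous_weylSum I g₁).norm (continuous_weylSum I g₂).norm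
        hcont (arcMajorant_nonneg lam) zero_le_one
    _ ≤ (A * threeHalvesNorm I g₁ ^ 2) * (A * threeHalvesNorm I g₂ ^ 2) :=
        mul_le_mul (hsq hg₁) (hsq hg₂) (hsq₀ g₂) (by positivity)
    _ = (A * (threeHalvesNorm I g₁ * threeHalvesNorm I g₂)) ^ 2 := by ring

lemma mem_rootInterval {s : ℤ} (hs : s ^ 2 ≤ lam) : s ∈ rootInterval lam := by
  have habs : s.natAbs ≤ Nat.sqrt lam := by
    rw [Nat.le_sqrt, ← sq]
    zify
    rwa [sq_abs]
  rw [rootInterval, mem_Icc]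
  lia

lemma apply_mem_rootInterval {n : ℕ} {x : Fin n → ℤ} (hx : x ∈ sphere n lam) (k : Fin n) :
    x k ∈ rootInterval lam :=
  mem_rootInterval ((sq_apply_le_sum x k).trans_eq (mem_sphere.mp hx))

lemma exp_neg_pi_le_prod_gaussian {n : ℕ} (hlam : 1 ≤ lam) {x : Fin n → ℤ}
    (hx : x ∈ sphere n lam) (t : Finset (Fin n)) :
    Real.exp (-Real.pi) ≤ ∏ k ∈ t, gaussian lam (x k) := by
  have hlam' : (0 : ℝ) < lam := by exact_mod_cast hlam
  have hsum : ∑ k ∈ t, (x k : ℝ) ^ 2 ≤ lam := by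
    rw [show (lam : ℝ) = ∑ k, (x k : ℝ) ^ 2 by exact_mod_cast (mem_sphere.mp hx).symm]
    exact sum_le_sum_of_subset_of_nonneg (subset_univ t) fun _ _ _ ↦ sq_nonneg _
  simp only [gaussian]
  rw [← Real.exp_sum, ← mul_sum, Real.exp_le_exp]
  have hratio : 1 / lam * ∑ k ∈ t, (x k : ℝ) ^ 2 ≤ 1 := by
    rw [one_div_mul_eq_div]
    exact (div_le_one hlam').mpr hsum
  nlinarith [Real.pi_pos]

lemma prod_eq_mul_mul_prod_erase_erase {ι M : Type*} [Fintype ι] [DecidableEq ι] [CommMonoid M]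
    {i j : ι} (hij : i ≠ j) (F : ι → M) :
    ∏ k, F k = F i * F j * ∏ k ∈ (univ.erase i).erase j, F k := by
  rw [mul_assoc, mul_prod_erase _ _ (mem_erase.mpr ⟨hij.symm, mem_univ j⟩),
    mul_prod_erase _ _ (mem_univ i)]

/- The Gaussian weights put on the other coordinates are bounded below on the sphere and make their
exponential sums small away from rationals with small denominator. -/
lemma exp_neg_pi_mul_sum_sphere_le {n : ℕ} (hlam : 1 ≤ lam) (hs : rootInterval lam ⊆ s)
    {i j : Fin n} (hij : i ≠ j) (hg₁ : ∀ x, 0 ≤ g₁ x) (hg₂ : ∀ x, 0 ≤ g₂ x) :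
    Real.exp (-Real.pi) * ∑ x ∈ sphere n lam, g₁ (x i) * g₂ (x j) ≤
      ∫ α in (0 : ℝ)..1, ‖weylSum (rootInterval lam) g₁ α‖ * ‖weylSum (rootInterval lam) g₂ α‖ *
        ‖weylSum s (gaussian lam) α‖ ^ (n - 2) := by
  let φ : Fin n → ℤ → ℝ := fun k ↦ if k = i then g₁ else if k = j then g₂ else gaussian lam
  let t : Fin n → Finset ℤ := fun k ↦ if k = i ∨ k = j then rootInterval lam else s
  have hφ {k : Fin n} (hk : k ∈ (univ.erase i).erase j) : φ k = gaussian lam := by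
    simp only [mem_erase] at hk
    simp only [φ, if_neg hk.1, if_neg hk.2.1]
  have ht {k : Fin n} (hk : k ∈ (univ.erase i).erase j) : t k = s := by
    simp only [mem_erase] at hk
    simp only [t, if_neg (not_or.mpr ⟨hk.2.1, hk.1⟩)]
  have hφi : φ i = g₁ := if_pos rfl
  have hφj : φ j = g₂ := by simp only [φ, if_neg hij.symm, if_pos]
  have hti : t i = rootInterval lam := if_pos (.inl rfl)
  have htj : t j = rootInterval lam := if_pos (.inr rfl)
  have hcard : #((univ.erase i).erase j) = n - 2 := by
    rw [card_erase_of_mem (mem_erase.mpr ⟨hij.symm, mem_univ j⟩), card_erase_of_mem (mem_univ i),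
      card_univ, Fintype.card_fin, Nat.sub_sub]
  have hsphere : {x ∈ Fintype.piFinset t | ∑ k, x k ^ 2 = (lam : ℤ)} = sphere n lam := by
    ext x
    rw [mem_filter, mem_sphere, and_iff_right_iff_imp, Fintype.mem_piFinset]
    intro hx k
    have hk := apply_mem_rootInterval (mem_sphere.mpr hx) k
    by_cases hkij : k = i ∨ k = j
    · simpa only [t, if_pos hkij] using hk
    · simpa only [t, if_neg hkij] using hs hk
  have hcircle := sum_prod_le_integral_prod_norm_weylSum t φ lam
  rw [hsphere] at hcircle
  refine le_trans ?_ (hcircle.trans_eq (intervalIntegral.integral_congr fun α _ ↦ ?_))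
  · rw [mul_sum]
    refine sum_le_sum fun x hx ↦ ?_
    rw [prod_eq_mul_mul_prod_erase_erase hij, hφi, hφj, mul_comm,
      prod_congr rfl fun k hk ↦ by rw [hφ hk]]
    exact mul_le_mul_of_nonneg_left (exp_neg_pi_le_prod_gaussian hlam hx _)
      (mul_nonneg (hg₁ _) (hg₂ _))
  · rw [prod_eq_mul_mul_prod_erase_erase hij, hφi, hφj, hti, htj,
      prod_congr rfl fun k hk ↦ by rw [hφ hk, ht hk], prod_const, hcard]

/-- The local average `(lam^(-1/2) ∑_{|x| ≤ √lam} g(x)^{3/2})^{2/3}` of a nonnegative function. -/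
def threeHalvesMean (lam : ℕ) (g : ℤ → ℝ) : ℝ :=
  ((lam : ℝ) ^ (-(1 / 2) : ℝ) * ∑ x ∈ rootInterval lam, g x ^ (3 / 2 : ℝ)) ^ (2 / 3 : ℝ)

lemma threeHalvesMean_eq (lam : ℕ) (hg : ∀ x, 0 ≤ g x) :
    threeHalvesMean lam g =
      (lam : ℝ) ^ (-(1 / 3) : ℝ) * threeHalvesNorm (rootInterval lam) g := by
  rw [threeHalvesMean, Real.mul_rpow (by positivity) (sum_rpow_three_halves_nonneg _ hg),
    ← Real.rpow_mul lam.cast_nonneg, threeHalvesNorm]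
  norm_num

lemma exists_sum_sphere_mul_le_threeHalvesNorm {n : ℕ} (hn : 5 ≤ n) : ∃ C : ℝ, 0 ≤ C ∧
    ∀ lam : ℕ, 1 ≤ lam → ∀ i j : Fin n, i ≠ j → ∀ g₁ g₂ : ℤ → ℝ, (∀ x, 0 ≤ g₁ x) →
    (∀ x, 0 ≤ g₂ x) → ∑ x ∈ sphere n lam, g₁ (x i) * g₂ (x j) ≤
      C * (lam : ℝ) ^ ((n : ℝ) / 2 - 1 - 2 / 3) *
        (threeHalvesNorm (rootInterval lam) g₁ * threeHalvesNorm (rootInterval lam) g₂) := by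
  obtain ⟨B, hB, hweyl⟩ := exists_norm_weylSum_gaussian_pow_le
  obtain ⟨C, hC, hbilinear⟩ := exists_integral_norm_weylSum_mul_arcMajorant_le
  refine ⟨Real.exp Real.pi * B ^ (n - 2) * C, by positivity,
    fun lam hlam i j hij g₁ g₂ hg₁ hg₂ ↦ ?_⟩
  obtain ⟨s, hs, hweyl⟩ := hweyl lam hlam
  have hlam' : (0 : ℝ) < lam := by exact_mod_cast hlam
  have hcont := continuous_arcMajorant hlam
  set I := rootInterval lam
  set E := B ^ (n - 2) * (lam : ℝ) ^ ((((n - 2 : ℕ) : ℝ) - 3) / 2)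
  have hE : 0 ≤ E := by positivity
  have hpow : (lam : ℝ) ^ ((((n - 2 : ℕ) : ℝ) - 3) / 2) * (lam : ℝ) ^ (5 / 6 : ℝ) =
      (lam : ℝ) ^ ((n : ℝ) / 2 - 1 - 2 / 3) := by
    rw [← Real.rpow_add hlam', Nat.cast_sub (by lia)]
    congr 1
    push_cast
    ring
  have hintegral : ∫ α in (0 : ℝ)..1, ‖weylSum I g₁ α‖ * ‖weylSum I g₂ α‖ *
        ‖weylSum s (gaussian lam) α‖ ^ (n - 2) ≤
      E * ∫ α in (0 : ℝ)..1, ‖weylSum I g₁ α‖ * ‖weylSum I g₂ α‖ * arcMajorant lam α := by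
    rw [← intervalIntegral.integral_const_mul]
    refine intervalIntegral.integral_mono_on zero_le_one
      (Continuous.intervalIntegrable (by fun_prop) _ _)
      (Continuous.intervalIntegrable (by fun_prop) _ _) fun α hα ↦ ?_
    exact (mul_le_mul_of_nonneg_left (hweyl α hα.1 hα.2 (n - 2) (by lia))
      (by positivity)).trans_eq (by ring)
  have hlower := exp_neg_pi_mul_sum_sphere_le hlam hs hij hg₁ hg₂
  rw [Real.exp_neg, inv_mul_le_iff₀ (Real.exp_pos _)] at hlower
  refine (hlower.trans (mul_le_mul_of_nonneg_left (hintegral.trans (mul_le_mul_of_nonneg_left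
    (hbilinear lam hlam g₁ g₂ hg₁ hg₂) hE)) (Real.exp_pos _).le)).trans_eq ?_
  rw [← hpow]
  ring

lemma exists_sum_sphere_mul_le_threeHalvesMean {n : ℕ} (hn : 5 ≤ n) : ∃ C : ℝ, 0 ≤ C ∧
    ∀ lam : ℕ, 1 ≤ lam → ∀ i j : Fin n, i ≠ j → ∀ g₁ g₂ : ℤ → ℝ, (∀ x, 0 ≤ g₁ x) →
    (∀ x, 0 ≤ g₂ x) → ∑ x ∈ sphere n lam, g₁ (x i) * g₂ (x j) ≤
      C * #(sphere n lam) * (threeHalvesMean lam g₁ * threeHalvesMean lam g₂) := by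
  obtain ⟨C, hC, hsum⟩ := exists_sum_sphere_mul_le_threeHalvesNorm hn
  obtain ⟨c, hc, hcard⟩ := exists_le_card_sphere hn
  refine ⟨C * c⁻¹, by positivity, fun lam hlam i j hij g₁ g₂ hg₁ hg₂ ↦ ?_⟩
  have hlam' : (0 : ℝ) < lam := by exact_mod_cast hlam
  have hN₁ := threeHalvesNorm_nonneg (rootInterval lam) hg₁
  have hN₂ := threeHalvesNorm_nonneg (rootInterval lam) hg₂
  rw [threeHalvesMean_eq lam hg₁, threeHalvesMean_eq lam hg₂]
  set N₁ := threeHalvesNorm (rootInterval lam) g₁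
  set N₂ := threeHalvesNorm (rootInterval lam) g₂
  have hpow : (lam : ℝ) ^ ((n : ℝ) / 2 - 1 - 2 / 3) = (lam : ℝ) ^ ((n : ℝ) / 2 - 1) *
      ((lam : ℝ) ^ (-(1 / 3) : ℝ) * (lam : ℝ) ^ (-(1 / 3) : ℝ)) := by
    rw [← Real.rpow_add hlam', ← Real.rpow_add hlam']
    ring_nf
  calc ∑ x ∈ sphere n lam, g₁ (x i) * g₂ (x j)
      ≤ C * (lam : ℝ) ^ ((n : ℝ) / 2 - 1 - 2 / 3) * (N₁ * N₂) := hsum lam hlam i j hij g₁ g₂ hg₁ hg₂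
    _ = C * c⁻¹ * (c * (lam : ℝ) ^ ((n : ℝ) / 2 - 1)) *
          ((lam : ℝ) ^ (-(1 / 3) : ℝ) * N₁ * ((lam : ℝ) ^ (-(1 / 3) : ℝ) * N₂)) := by
        rw [hpow]
        field_simp
    _ ≤ C * c⁻¹ * #(sphere n lam) *
          ((lam : ℝ) ^ (-(1 / 3) : ℝ) * N₁ * ((lam : ℝ) ^ (-(1 / 3) : ℝ) * N₂)) := by
        have := hcard lam hlam
        gcongr

end

/-! ### The Hardy–Littlewood maximal function on the integers -/

/-- The one-sided Hardy–Littlewood maximal function: the supremum of the averages of `h` over the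
intervals `[y, y + k)`. The term `k = 0` is `0`. -/
def forwardMaximal (h : ℤ → ℝ≥0∞) (y : ℤ) : ℝ≥0∞ :=
  ⨆ k : ℕ, (k : ℝ≥0∞)⁻¹ * ∑ j ∈ range k, h (y + j)

lemma sum_range_add_eq_sum_Ico {M : Type*} [AddCommMonoid M] (h : ℤ → M) (y : ℤ) (k : ℕ) :
    ∑ j ∈ range k, h (y + j) = ∑ x ∈ Ico y (y + k), h x :=
  sum_nbij' (fun j ↦ y + j) (fun x ↦ (x - y).toNat) (by grind) (by grind) (by grind) (by grind)
    (by grind)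

lemma exists_lt_sum_Ico_of_lt_forwardMaximal {h : ℤ → ℝ≥0∞} {t : ℝ≥0∞} {y : ℤ}
    (ht : t < forwardMaximal h y) : ∃ k : ℕ, 0 < k ∧ t * k ≤ ∑ x ∈ Ico y (y + k), h x := by
  obtain ⟨k, hk⟩ := lt_iSup_iff.mp ht
  rw [sum_range_add_eq_sum_Ico, ← ENNReal.div_eq_inv_mul] at hk
  have hk_pos : 0 < k := Nat.pos_of_ne_zero (by rintro rfl; simp at hk)
  exact ⟨k, hk_pos, ENNReal.le_div_iff_mul_le (by simp [hk_pos.ne']) (by simp) |>.mp hk.le⟩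

/- The interval witnessing `t < forwardMaximal h (min s)` covers an initial segment of `s`;
discarding that segment and repeating selects disjoint intervals covering `s`. -/
lemma exists_mul_card_le_sum_of_lt_forwardMaximal {h : ℤ → ℝ≥0∞} {t : ℝ≥0∞} (s : Finset ℤ)
    (hs : ∀ y ∈ s, t < forwardMaximal h y) :
    ∃ u : Finset ℤ, (∀ y ∈ u, ∃ x ∈ s, x ≤ y) ∧ t * #s ≤ ∑ y ∈ u, h y := by
  induction s using Finset.strongInduction with
  | H s ih =>
    obtain rfl | hne := s.eq_empty_or_nonempty
    · exact ⟨∅, by simp⟩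
    set m := s.min' hne
    have hm : m ∈ s := s.min'_mem hne
    obtain ⟨k, hk_pos, hk⟩ := exists_lt_sum_Ico_of_lt_forwardMaximal (hs m hm)
    have hsub : {y ∈ s | m + k ≤ y} ⊂ s := filter_ssubset.mpr ⟨m, hm, by lia⟩
    obtain ⟨u, hu_ge, hu⟩ := ih _ hsub fun y hy ↦ hs y (mem_of_mem_filter y hy)
    have hdisj : Disjoint (Ico m (m + k)) u := by
      refine disjoint_left.mpr fun y hy hyu ↦ ?_
      obtain ⟨x, hx, hxy⟩ := hu_ge y hyu
      grind
    have hcover : s ⊆ Ico m (m + k) ∪ {y ∈ s | m + k ≤ y} := fun y hy ↦ by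
      have := s.min'_le y hy
      grind
    have hcard : #s ≤ k + #{y ∈ s | m + k ≤ y} :=
      (card_le_card hcover).trans <| (card_union_le _ _).trans (by simp)
    refine ⟨Ico m (m + k) ∪ u, fun y hy ↦ ?_, ?_⟩
    · rcases mem_union.mp hy with hy | hy
      · exact ⟨m, hm, (mem_Ico.mp hy).1⟩
      · obtain ⟨x, hx, hxy⟩ := hu_ge y hy
        exact ⟨x, mem_of_mem_filter x hx, hxy⟩
    · calc t * #s ≤ t * (k + #{y ∈ s | m + k ≤ y} : ℕ) := by gcongr
        _ = t * k + t * #{y ∈ s | m + k ≤ y} := by rw [Nat.cast_add, mul_add]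
        _ ≤ _ := by rw [sum_union hdisj]; exact add_le_add hk hu

lemma mul_count_lt_forwardMaximal_le (h : ℤ → ℝ≥0∞) (t : ℝ≥0∞) :
    t * Measure.count {y | t < forwardMaximal h y} ≤ ∑' y, h y := by
  classical
  rw [← lintegral_indicator_const .of_discrete, lintegral_count]
  refine ENNReal.summable.tsum_le_of_sum_le fun s ↦ ?_
  obtain ⟨u, -, hu⟩ := exists_mul_card_le_sum_of_lt_forwardMaximal (t := t)
    {y ∈ s | t < forwardMaximal h y} fun y hy ↦ (mem_filter.mp hy).2
  calc ∑ y ∈ s, {y | t < forwardMaximal h y}.indicator (fun _ ↦ t) y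
      = t * #{y ∈ s | t < forwardMaximal h y} := by
        simp [Set.indicator_apply, ← sum_filter, mul_comm]
    _ ≤ ∑' y, h y := hu.trans (ENNReal.sum_le_tsum u)

lemma forwardMaximal_le_add (h : ℤ → ℝ≥0∞) (t : ℝ≥0∞) (y : ℤ) :
    forwardMaximal h y ≤ forwardMaximal ({x | t < h x}.indicator h) y + t := by
  refine iSup_le fun k ↦ ?_
  have hpoint (x : ℤ) : h x ≤ {x | t < h x}.indicator h x + t := by
    by_cases hx : t < h x
    · simp [hx]
    · simp [hx, not_lt.mp hx]
  calc (k : ℝ≥0∞)⁻¹ * ∑ j ∈ range k, h (y + j)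
      ≤ (k : ℝ≥0∞)⁻¹ * ∑ j ∈ range k, ({x | t < h x}.indicator h (y + j) + t) := by
        gcongr with j
        exact hpoint _
    _ = (k : ℝ≥0∞)⁻¹ * ∑ j ∈ range k, {x | t < h x}.indicator h (y + j) + (k : ℝ≥0∞)⁻¹ * k * t := by
        rw [sum_add_distrib, sum_const, card_range, nsmul_eq_mul, mul_add, mul_assoc]
    _ ≤ _ := by
        gcongr
        · exact le_iSup (fun k : ℕ ↦ (k : ℝ≥0∞)⁻¹ *
            ∑ j ∈ range k, {x | t < h x}.indicator h (y + j)) k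
        · exact mul_le_of_le_one_left' (ENNReal.inv_mul_le_one _)

lemma mul_count_two_mul_lt_forwardMaximal_le (h : ℤ → ℝ≥0∞) {t : ℝ≥0∞} (ht : t ≠ ∞) :
    t * Measure.count {y | 2 * t < forwardMaximal h y} ≤ ∑' y, {x | t < h x}.indicator h y := by
  refine le_trans ?_ (mul_count_lt_forwardMaximal_le _ t)
  refine mul_le_mul_right (measure_mono fun y hy ↦ ?_) t
  have := hy.trans_le (forwardMaximal_le_add h t y)
  rw [two_mul] at this
  exact (ENNReal.add_lt_add_iff_right ht).mp this

lemma forwardMaximal_le_of_le {h : ℤ → ℝ≥0∞} {B : ℝ≥0∞} (hB : ∀ x, h x ≤ B) (y : ℤ) :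
    forwardMaximal h y ≤ B := by
  refine iSup_le fun k ↦ ?_
  calc (k : ℝ≥0∞)⁻¹ * ∑ j ∈ range k, h (y + j) ≤ (k : ℝ≥0∞)⁻¹ * (k * B) := by
        gcongr
        simpa using sum_le_card_nsmul (range k) _ B fun j _ ↦ hB _
    _ ≤ B := by
        rw [← mul_assoc]
        exact mul_le_of_le_one_left' (ENNReal.inv_mul_le_one _)

lemma lintegral_rpow_eq_of_ne_top {α : Type*} [MeasurableSpace α] (μ : Measure α)
    {f : α → ℝ≥0∞} (hf : Measurable f) (hf_top : ∀ x, f x ≠ ∞) {p : ℝ} (hp : 0 < p) :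
    ∫⁻ x, f x ^ p ∂μ = ENNReal.ofReal p *
      ∫⁻ t in Set.Ioi (0 : ℝ), μ {x | ENNReal.ofReal t < f x} * ENNReal.ofReal (t ^ (p - 1)) := by
  have hlayer := lintegral_rpow_eq_lintegral_meas_lt_mul μ (f := fun x ↦ (f x).toReal)
    (Filter.Eventually.of_forall fun _ ↦ ENNReal.toReal_nonneg) hf.ennreal_toReal.aemeasurable hp
  have hpow (x : α) : ENNReal.ofReal ((f x).toReal ^ p) = f x ^ p := by
    rw [← ENNReal.ofReal_rpow_of_nonneg ENNReal.toReal_nonneg hp.le,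
      ENNReal.ofReal_toReal (hf_top x)]
  simp only [hpow] at hlayer
  rw [hlayer]
  congr 1
  refine setLIntegral_congr_fun measurableSet_Ioi fun t ht ↦ ?_
  simp only [ENNReal.ofReal_lt_iff_lt_toReal (Set.mem_Ioi.mp ht).le (hf_top _)]

lemma count_lt_half_forwardMaximal_mul_le (h : ℤ → ℝ≥0∞) (p : ℝ) {t : ℝ} (ht : 0 < t) :
    Measure.count {y | ENNReal.ofReal t < forwardMaximal h y / 2} * ENNReal.ofReal (t ^ (p - 1)) ≤
      Measure.count.withDensity h {y | ENNReal.ofReal t < h y} *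
        ENNReal.ofReal (t ^ (p - 1 - 1)) := by
  have hset : {y | ENNReal.ofReal t < forwardMaximal h y / 2} =
      {y | 2 * ENNReal.ofReal t < forwardMaximal h y} := by
    ext y
    rw [Set.mem_ofPred_eq, Set.mem_ofPred_eq, ENNReal.lt_div_iff_mul_lt (by simp) (by simp),
      mul_comm]
  have hdensity : Measure.count.withDensity h {y | ENNReal.ofReal t < h y} =
      ∑' y, {y | ENNReal.ofReal t < h y}.indicator h y := by
    rw [withDensity_apply _ .of_discrete, ← lintegral_indicator .of_discrete, lintegral_count]
  have hpow : t ^ (p - 1) = t * t ^ (p - 1 - 1) := by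
    rw [Real.rpow_sub_one ht.ne' (p - 1), mul_div_cancel₀ _ ht.ne']
  rw [hset, hdensity, hpow, ENNReal.ofReal_mul ht.le, ← mul_assoc, mul_comm (Measure.count _)]
  gcongr
  exact mul_count_two_mul_lt_forwardMaximal_le h ENNReal.ofReal_ne_top

lemma tsum_half_forwardMaximal_rpow_le {p : ℝ} (hp : 1 < p) {h : ℤ → ℝ≥0∞}
    (hh : ∑' y, h y ^ p ≠ ∞) :
    ∑' y, (forwardMaximal h y / 2) ^ p ≤ ENNReal.ofReal (p / (p - 1)) * ∑' y, h y ^ p := by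
  have hp_pos : 0 < p := zero_lt_one.trans hp
  have hh_le (x : ℤ) : h x ≤ (∑' y, h y ^ p) ^ p⁻¹ := by
    rw [← ENNReal.rpow_rpow_inv hp_pos.ne' (h x)]
    gcongr
    exact ENNReal.le_tsum x
  have hbound : (∑' y, h y ^ p) ^ p⁻¹ ≠ ∞ := ENNReal.rpow_ne_top_of_nonneg (by positivity) hh
  have hh_top (x : ℤ) : h x ≠ ∞ := ne_top_of_le_ne_top hbound (hh_le x)
  have hM_top (y : ℤ) : forwardMaximal h y / 2 ≠ ∞ := ENNReal.div_ne_top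
    (ne_top_of_le_ne_top hbound (forwardMaximal_le_of_le hh_le y)) two_ne_zero
  set μ : Measure ℤ := Measure.count.withDensity h
  have hdensity : ∫⁻ y, h y ^ (p - 1) ∂μ = ∑' y, h y ^ p := by
    rw [lintegral_withDensity_eq_lintegral_mul _ .of_discrete .of_discrete, lintegral_count]
    refine tsum_congr fun y ↦ ?_
    simpa using (ENNReal.rpow_add_of_nonneg (x := h y) 1 (p - 1) (by simp) (by linarith)).symm
  calc ∑' y, (forwardMaximal h y / 2) ^ p
      = ENNReal.ofReal p * ∫⁻ t in Set.Ioi (0 : ℝ),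
          Measure.count {y | ENNReal.ofReal t < forwardMaximal h y / 2} *
            ENNReal.ofReal (t ^ (p - 1)) := by
        rw [← lintegral_count, lintegral_rpow_eq_of_ne_top _ .of_discrete hM_top hp_pos]
    _ ≤ ENNReal.ofReal p * ∫⁻ t in Set.Ioi (0 : ℝ),
          μ {y | ENNReal.ofReal t < h y} * ENNReal.ofReal (t ^ (p - 1 - 1)) := by
        refine mul_le_mul_right (setLIntegral_mono' measurableSet_Ioi fun t ht ↦ ?_) _
        exact count_lt_half_forwardMaximal_mul_le h p ht
    _ = ENNReal.ofReal (p / (p - 1)) * ∫⁻ y, h y ^ (p - 1) ∂μ := by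
        rw [lintegral_rpow_eq_of_ne_top μ .of_discrete hh_top (sub_pos.mpr hp), ← mul_assoc,
          ← ENNReal.ofReal_mul (by have := sub_pos.mpr hp; positivity),
          div_mul_cancel₀ _ (sub_pos.mpr hp).ne']
    _ = _ := by rw [hdensity]

lemma tsum_forwardMaximal_rpow_le {p : ℝ} (hp : 1 < p) (h : ℤ → ℝ≥0∞) :
    ∑' y, forwardMaximal h y ^ p ≤ 2 ^ p * ENNReal.ofReal (p / (p - 1)) * ∑' y, h y ^ p := by
  have hp_pos : 0 < p := zero_lt_one.trans hp
  by_cases hh : ∑' y, h y ^ p = ∞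
  · have hconst : (2 : ℝ≥0∞) ^ p * ENNReal.ofReal (p / (p - 1)) ≠ 0 :=
      mul_ne_zero (by simp) (ENNReal.ofReal_pos.mpr (div_pos hp_pos (sub_pos.mpr hp))).ne'
    rw [hh, ENNReal.mul_top hconst]
    exact le_top
  have hhalf (y : ℤ) : forwardMaximal h y ^ p = 2 ^ p * (forwardMaximal h y / 2) ^ p := by
    rw [← ENNReal.mul_rpow_of_nonneg _ _ hp_pos.le, ENNReal.mul_div_cancel two_ne_zero (by simp)]
  simp only [hhalf, ENNReal.tsum_mul_left, mul_assoc]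
  gcongr
  exact tsum_half_forwardMaximal_rpow_le hp hh

/-- The maximal function over all `lam ≥ 1` of the averages of `h` over the integers within `√lam`
of `y`, normalised by `√lam` instead of the number of those integers. -/
def localMaximal (h : ℤ → ℝ≥0∞) (y : ℤ) : ℝ≥0∞ :=
  ⨆ (lam : ℕ) (_ : 1 ≤ lam), (lam : ℝ≥0∞) ^ (-(1 / 2) : ℝ) * ∑ x ∈ rootInterval lam, h (y - x)

lemma sum_rootInterval_sub_le (h : ℤ → ℝ≥0∞) (lam : ℕ) (y : ℤ) :
    ∑ x ∈ rootInterval lam, h (y - x) ≤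
      ∑ j ∈ range (Nat.sqrt lam + 1), h (y + j) +
        ∑ j ∈ range (Nat.sqrt lam + 1), h (-(-y + j)) := by
  set N := Nat.sqrt lam
  have hsub : rootInterval lam ⊆ (range (N + 1)).image (fun j : ℕ ↦ -(j : ℤ)) ∪
      (range (N + 1)).image (fun j : ℕ ↦ (j : ℤ)) := by
    intro x hx
    have hx : -(N : ℤ) ≤ x ∧ x ≤ N := mem_Icc.mp hx
    simp only [mem_union, mem_image, mem_range]
    rcases le_total 0 x with hx_sign | hx_sign
    · exact .inr ⟨x.toNat, by lia, by lia⟩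
    · exact .inl ⟨(-x).toNat, by lia, by lia⟩
  calc ∑ x ∈ rootInterval lam, h (y - x)
      ≤ ∑ x ∈ (range (N + 1)).image (fun j : ℕ ↦ -(j : ℤ)), h (y - x) +
          ∑ x ∈ (range (N + 1)).image (fun j : ℕ ↦ (j : ℤ)), h (y - x) := by
        rw [← sum_union_inter]
        exact (sum_le_sum_of_subset hsub).trans le_self_add
    _ = _ := by
        rw [sum_image (by simp), sum_image (by simp)]
        simp only [sub_neg_eq_add, neg_add_eq_sub, neg_sub]

lemma rpow_neg_half_le_two_mul_inv {lam : ℕ} (hlam : 1 ≤ lam) :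
    (lam : ℝ≥0∞) ^ (-(1 / 2) : ℝ) ≤ 2 * ((Nat.sqrt lam + 1 : ℕ) : ℝ≥0∞)⁻¹ := by
  set N := Nat.sqrt lam
  have hN : 1 ≤ N := Nat.le_sqrt.mpr (by simpa using hlam)
  have hN_le : (N : ℝ≥0∞) ≤ (lam : ℝ≥0∞) ^ (1 / 2 : ℝ) := by
    rw [one_div, ENNReal.le_rpow_inv_iff (by norm_num)]
    exact_mod_cast Nat.sqrt_le' lam
  calc (lam : ℝ≥0∞) ^ (-(1 / 2) : ℝ) ≤ (N : ℝ≥0∞)⁻¹ := by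
        rw [ENNReal.rpow_neg]
        gcongr
    _ ≤ 2 * ((N + 1 : ℕ) : ℝ≥0∞)⁻¹ := by
        rw [← div_eq_mul_inv, ENNReal.le_div_iff_mul_le (by simp) (by simp),
          ← ENNReal.div_eq_inv_mul]
        refine ENNReal.div_le_of_le_mul ?_
        exact_mod_cast (by lia : N + 1 ≤ 2 * N)

lemma localMaximal_le (h : ℤ → ℝ≥0∞) (y : ℤ) :
    localMaximal h y ≤ 2 * (forwardMaximal h y + forwardMaximal (fun x ↦ h (-x)) (-y)) := by
  refine iSup₂_le fun lam hlam ↦ ?_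
  set N := Nat.sqrt lam
  calc (lam : ℝ≥0∞) ^ (-(1 / 2) : ℝ) * ∑ x ∈ rootInterval lam, h (y - x)
      ≤ 2 * ((N + 1 : ℕ) : ℝ≥0∞)⁻¹ *
        (∑ j ∈ range (N + 1), h (y + j) + ∑ j ∈ range (N + 1), h (-(-y + j))) :=
      mul_le_mul' (rpow_neg_half_le_two_mul_inv hlam) (sum_rootInterval_sub_le h lam y)
    _ ≤ _ := by
      rw [mul_assoc, mul_add]
      gcongr
      · exact le_iSup (fun k : ℕ ↦ (k : ℝ≥0∞)⁻¹ * ∑ j ∈ range k, h (y + j)) (N + 1)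
      · exact le_iSup (fun k : ℕ ↦ (k : ℝ≥0∞)⁻¹ * ∑ j ∈ range k, h (-(-y + j))) (N + 1)

lemma exists_tsum_localMaximal_rpow_le {p : ℝ} (hp : 1 < p) :
    ∃ C : ℝ≥0, ∀ h : ℤ → ℝ≥0∞, ∑' y, localMaximal h y ^ p ≤ C * ∑' y, h y ^ p := by
  have hp_pos : 0 < p := zero_lt_one.trans hp
  set A : ℝ≥0∞ := 2 ^ p * ENNReal.ofReal (p / (p - 1))
  have hconst : (2 : ℝ≥0∞) ^ p * (2 ^ (p - 1) * (2 * A)) ≠ ∞ := by finiteness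
  refine ⟨(2 ^ p * (2 ^ (p - 1) * (2 * A))).toNNReal, fun h ↦ ?_⟩
  rw [ENNReal.coe_toNNReal hconst]
  have hpoint (y : ℤ) : localMaximal h y ^ p ≤ 2 ^ p * (2 ^ (p - 1) *
      (forwardMaximal h y ^ p + forwardMaximal (fun x ↦ h (-x)) (-y) ^ p)) := by
    refine (ENNReal.rpow_le_rpow (localMaximal_le h y) hp_pos.le).trans ?_
    rw [ENNReal.mul_rpow_of_nonneg _ _ hp_pos.le]
    gcongr
    exact ENNReal.rpow_add_le_mul_rpow_add_rpow _ _ hp.le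
  have hbackward : ∑' y, forwardMaximal (fun x ↦ h (-x)) (-y) ^ p ≤ A * ∑' y, h y ^ p := by
    calc ∑' y, forwardMaximal (fun x ↦ h (-x)) (-y) ^ p
        = ∑' y, forwardMaximal (fun x ↦ h (-x)) y ^ p :=
          (Equiv.neg ℤ).tsum_eq fun y ↦ forwardMaximal (fun x ↦ h (-x)) y ^ p
      _ ≤ A * ∑' y, h (-y) ^ p := tsum_forwardMaximal_rpow_le hp _
      _ = A * ∑' y, h y ^ p := by rw [← (Equiv.neg ℤ).tsum_eq fun y ↦ h y ^ p]; rfl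
  calc ∑' y, localMaximal h y ^ p
      ≤ 2 ^ p * (2 ^ (p - 1) * (∑' y, forwardMaximal h y ^ p +
          ∑' y, forwardMaximal (fun x ↦ h (-x)) (-y) ^ p)) := by
        rw [← ENNReal.tsum_add, ← ENNReal.tsum_mul_left, ← ENNReal.tsum_mul_left]
        exact ENNReal.tsum_le_tsum hpoint
    _ ≤ 2 ^ p * (2 ^ (p - 1) * (A * ∑' y, h y ^ p + A * ∑' y, h y ^ p)) := by
        gcongr
        exact tsum_forwardMaximal_rpow_le hp h
    _ = 2 ^ p * (2 ^ (p - 1) * (2 * A)) * ∑' y, h y ^ p := by ring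

/-! ### Sufficiency -/

lemma tsum_prod_rpow_inv_le {α : Type*} {n : ℕ} (hn : n ≠ 0) (w : Fin n → α → ℝ≥0∞) :
    ∑' x, ∏ i, w i x ^ (n : ℝ)⁻¹ ≤ ∏ i, (∑' x, w i x) ^ (n : ℝ)⁻¹ := by
  let : MeasurableSpace α := ⊤
  simpa only [lintegral_count] using
    ENNReal.lintegral_prod_norm_pow_le (μ := (Measure.count : Measure α)) univ
      (f := w) (p := fun _ ↦ (n : ℝ)⁻¹) (fun i _ ↦ measurable_from_top.aemeasurable)
      (by simp [hn]) fun i _ ↦ by positivity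

lemma sum_prod_rpow_inv_le {α : Type*} {n : ℕ} (hn : n ≠ 0) (s : Finset α)
    (w : Fin n → α → ℝ≥0∞) :
    ∑ x ∈ s, ∏ i, w i x ^ (n : ℝ)⁻¹ ≤ ∏ i, (∑ x ∈ s, w i x) ^ (n : ℝ)⁻¹ := by
  simp only [← Finset.tsum_subtype]
  exact tsum_prod_rpow_inv_le hn fun i (x : s) ↦ w i x

lemma prod_mul_apply_perm_rpow {ι : Type*} [Fintype ι] (σ : Equiv.Perm ι) (u : ι → ℝ≥0∞)
    {r : ℝ} (hr : 0 ≤ r) : ∏ i, (u i * u (σ i)) ^ r = ∏ i, u i ^ (2 * r) := by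
  simp only [ENNReal.mul_rpow_of_nonneg _ _ hr, prod_mul_distrib]
  rw [Equiv.prod_comp σ fun i ↦ u i ^ r, ← prod_mul_distrib]
  refine prod_congr rfl fun i _ ↦ ?_
  rw [two_mul, ENNReal.rpow_add_of_nonneg _ _ hr hr]

lemma prod_const_mul_rpow_inv {n : ℕ} (hn : n ≠ 0) (c : ℝ≥0∞) (u : Fin n → ℝ≥0∞) :
    ∏ i, (c * u i) ^ (n : ℝ)⁻¹ = c * ∏ i, u i ^ (n : ℝ)⁻¹ := by
  simp only [ENNReal.mul_rpow_of_nonneg _ _ (inv_nonneg.mpr n.cast_nonneg), prod_mul_distrib,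
    prod_const, card_univ, Fintype.card_fin]
  rw [← ENNReal.rpow_natCast, ENNReal.rpow_inv_rpow (by exact_mod_cast hn)]

lemma ofReal_threeHalvesMean_le_localMaximal {lam : ℕ} (hlam : 1 ≤ lam) (h : ℤ → ℝ≥0) (y : ℤ) :
    ENNReal.ofReal (threeHalvesMean lam fun x ↦ (h (y - x) : ℝ) ^ (2 / 3 : ℝ)) ≤
      localMaximal (fun x ↦ h x) y ^ (2 / 3 : ℝ) := by
  have hpow (x : ℤ) : ((h (y - x) : ℝ) ^ (2 / 3 : ℝ)) ^ (3 / 2 : ℝ) = h (y - x) := by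
    rw [← Real.rpow_mul NNReal.zero_le_coe]
    norm_num
  simp only [threeHalvesMean, hpow]
  rw [← ENNReal.ofReal_rpow_of_nonneg (by positivity) (by norm_num),
    ENNReal.ofReal_mul (by positivity), ← ENNReal.ofReal_rpow_of_pos (by positivity),
    ENNReal.ofReal_sum_of_nonneg fun _ _ ↦ NNReal.zero_le_coe]
  simp only [ENNReal.ofReal_natCast, ENNReal.ofReal_coe_nnreal]
  gcongr
  exact le_iSup₂ (f := fun (lam : ℕ) (_ : 1 ≤ lam) ↦ (lam : ℝ≥0∞) ^ (-(1 / 2) : ℝ) *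
    ∑ x ∈ rootInterval lam, (h (y - x) : ℝ≥0∞)) lam hlam

lemma exists_sum_sphere_mul_rpow_le_localMaximal {n : ℕ} (hn : 5 ≤ n) :
    ∃ C : ℝ≥0, ∀ lam, 1 ≤ lam → ∀ i j : Fin n, i ≠ j → ∀ (h₁ h₂ : ℤ → ℝ≥0) (y : ℤ),
      ∑ x ∈ sphere n lam, (h₁ (y - x i) * h₂ (y - x j) : ℝ≥0∞) ^ (2 / 3 : ℝ) ≤
        C * #(sphere n lam) *
          (localMaximal (fun x ↦ h₁ x) y * localMaximal (fun x ↦ h₂ x) y) ^ (2 / 3 : ℝ) := by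
  obtain ⟨C, hC, hpair⟩ := exists_sum_sphere_mul_le_threeHalvesMean hn
  refine ⟨C.toNNReal, fun lam hlam i j hij h₁ h₂ y ↦ ?_⟩
  set g₁ : ℤ → ℝ := fun x ↦ (h₁ (y - x) : ℝ) ^ (2 / 3 : ℝ)
  set g₂ : ℤ → ℝ := fun x ↦ (h₂ (y - x) : ℝ) ^ (2 / 3 : ℝ)
  have hg₁ (x : ℤ) : 0 ≤ g₁ x := by positivity
  have hg₂ (x : ℤ) : 0 ≤ g₂ x := by positivity
  calc ∑ x ∈ sphere n lam, (h₁ (y - x i) * h₂ (y - x j) : ℝ≥0∞) ^ (2 / 3 : ℝ)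
      = ENNReal.ofReal (∑ x ∈ sphere n lam, g₁ (x i) * g₂ (x j)) := by
        rw [ENNReal.ofReal_sum_of_nonneg fun x _ ↦ mul_nonneg (hg₁ _) (hg₂ _)]
        refine sum_congr rfl fun x _ ↦ ?_
        rw [ENNReal.ofReal_mul (hg₁ _), ENNReal.mul_rpow_of_nonneg _ _ (by norm_num)]
        simp only [g₁, g₂, ← ENNReal.ofReal_rpow_of_nonneg NNReal.zero_le_coe
          (by norm_num : (0 : ℝ) ≤ 2 / 3), ENNReal.ofReal_coe_nnreal]
    _ ≤ ENNReal.ofReal (C * #(sphere n lam) * (threeHalvesMean lam g₁ * threeHalvesMean lam g₂)) :=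
        ENNReal.ofReal_le_ofReal (hpair lam hlam i j hij g₁ g₂ hg₁ hg₂)
    _ = ENNReal.ofReal C * #(sphere n lam) *
          (ENNReal.ofReal (threeHalvesMean lam g₁) * ENNReal.ofReal (threeHalvesMean lam g₂)) := by
        rw [ENNReal.ofReal_mul (by positivity), ENNReal.ofReal_mul hC, ENNReal.ofReal_natCast,
          ENNReal.ofReal_mul]
        exact Real.rpow_nonneg (by positivity) _
    _ ≤ _ := by
        rw [ENNReal.mul_rpow_of_nonneg _ _ (by norm_num)]
        gcongr
        · exact le_rfl
        · exact ofReal_threeHalvesMean_le_localMaximal hlam h₁ y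
        · exact ofReal_threeHalvesMean_le_localMaximal hlam h₂ y

/- Pairing the coordinates along a permutation `σ` without fixed points, Hölder's inequality
reduces the product of `n` functions to products of the two functions of index `i` and `σ i`. -/
lemma exists_sum_sphere_prod_rpow_le_localMaximal {n : ℕ} (hn : 5 ≤ n) :
    ∃ C : ℝ≥0, ∀ lam, 1 ≤ lam → ∀ (h : Fin n → ℤ → ℝ≥0) (y : ℤ),
      ∑ x ∈ sphere n lam, ∏ i, ((h i (y - x i) : ℝ≥0∞) ^ (4 / 3 : ℝ)) ^ (n : ℝ)⁻¹ ≤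
        C * #(sphere n lam) *
          ∏ i, (localMaximal (fun x ↦ h i x) y ^ (4 / 3 : ℝ)) ^ (n : ℝ)⁻¹ := by
  obtain ⟨C, hpair⟩ := exists_sum_sphere_mul_rpow_le_localMaximal hn
  refine ⟨C, fun lam hlam h y ↦ ?_⟩
  have hn_ne : n ≠ 0 := by lia
  set σ : Equiv.Perm (Fin n) := finRotate n
  have hσ (i : Fin n) : i ≠ σ i := by
    have hi : i ∈ σ.support := by rw [support_finRotate_of_le (by lia)]; exact mem_univ i
    exact (Equiv.Perm.mem_support.mp hi).symm
  have hpairing (u : Fin n → ℝ≥0∞) : ∏ i, (u i ^ (4 / 3 : ℝ)) ^ (n : ℝ)⁻¹ =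
      ∏ i, ((u i * u (σ i)) ^ (2 / 3 : ℝ)) ^ (n : ℝ)⁻¹ := by
    simp only [← ENNReal.rpow_mul]
    rw [prod_mul_apply_perm_rpow σ u (by positivity)]
    ring_nf
  calc ∑ x ∈ sphere n lam, ∏ i, ((h i (y - x i) : ℝ≥0∞) ^ (4 / 3 : ℝ)) ^ (n : ℝ)⁻¹
      = ∑ x ∈ sphere n lam, ∏ i,
          ((h i (y - x i) * h (σ i) (y - x (σ i)) : ℝ≥0∞) ^ (2 / 3 : ℝ)) ^ (n : ℝ)⁻¹ :=
        sum_congr rfl fun x _ ↦ hpairing fun i ↦ h i (y - x i)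
    _ ≤ ∏ i, (∑ x ∈ sphere n lam,
          (h i (y - x i) * h (σ i) (y - x (σ i)) : ℝ≥0∞) ^ (2 / 3 : ℝ)) ^ (n : ℝ)⁻¹ :=
        sum_prod_rpow_inv_le hn_ne _ _
    _ ≤ ∏ i, (C * #(sphere n lam) * (localMaximal (fun x ↦ h i x) y *
          localMaximal (fun x ↦ h (σ i) x) y) ^ (2 / 3 : ℝ)) ^ (n : ℝ)⁻¹ := by
        gcongr with i
        exact hpair lam hlam i (σ i) (hσ i) (h i) (h (σ i)) y
    _ = _ := by
        rw [prod_const_mul_rpow_inv hn_ne, hpairing fun i ↦ localMaximal (fun x ↦ h i x) y]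

lemma mulAvg_eq (n lam : ℕ) (f : Fin n → ℤ → ℂ) (y : ℤ) :
    mulAvg n lam f y =
      (#(sphere n lam) : ℂ)⁻¹ * ∑ x ∈ sphere n lam, ∏ i, f i (y - x i) := by
  rw [mulAvg, sphereCount_eq_card, ← coe_sphere, finsum_mem_coe_finset]

lemma nnnorm_mulAvg_rpow_le {n lam : ℕ} (hS : (sphere n lam).Nonempty) (f : Fin n → ℤ → ℂ)
    (y : ℤ) {q : ℝ} (hq : 1 ≤ q) :
    ‖mulAvg n lam f y‖₊ ^ q ≤
      (#(sphere n lam) : ℝ≥0)⁻¹ * ∑ x ∈ sphere n lam, ∏ i, ‖f i (y - x i)‖₊ ^ q := by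
  have hcard : (#(sphere n lam) : ℝ≥0) ≠ 0 := by exact_mod_cast hS.card_ne_zero
  calc ‖mulAvg n lam f y‖₊ ^ q
      ≤ (∑ x ∈ sphere n lam, (#(sphere n lam) : ℝ≥0)⁻¹ * ∏ i, ‖f i (y - x i)‖₊) ^ q := by
        rw [mulAvg_eq, nnnorm_mul, nnnorm_inv, Complex.nnnorm_natCast, ← mul_sum]
        gcongr
        refine (nnnorm_sum_le _ _).trans_eq ?_
        simp only [nnnorm_prod]
    _ ≤ ∑ x ∈ sphere n lam, (#(sphere n lam) : ℝ≥0)⁻¹ * (∏ i, ‖f i (y - x i)‖₊) ^ q :=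
        NNReal.rpow_arith_mean_le_arith_mean_rpow _ _ _ (by simp [hcard]) hq
    _ = _ := by simp only [← mul_sum, NNReal.finsetProd_rpow]

lemma exists_maxFn_rpow_le_localMaximal {n : ℕ} (hn : 5 ≤ n) :
    ∃ C : ℝ≥0, ∀ q : ℝ, 1 ≤ q → ∀ (f : Fin n → ℤ → ℂ) (y : ℤ), maxFn n f y ^ q ≤
      C * ∏ i, (localMaximal (fun x ↦ ((‖f i x‖₊ ^ (3 / 4 * (n * q)) : ℝ≥0) : ℝ≥0∞)) y ^
        (4 / 3 : ℝ)) ^ (n : ℝ)⁻¹ := by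
  obtain ⟨C, hC⟩ := exists_sum_sphere_prod_rpow_le_localMaximal hn
  refine ⟨C, fun q hq f y ↦ ?_⟩
  have hq_pos : 0 < q := by positivity
  rw [← ENNReal.le_rpow_inv_iff hq_pos]
  refine iSup₂_le fun lam hlam ↦ (ENNReal.le_rpow_inv_iff hq_pos).mpr ?_
  have hS : 0 < #(sphere n lam) := card_sphere_pos (by lia) lam
  set h : Fin n → ℤ → ℝ≥0 := fun i x ↦ ‖f i x‖₊ ^ (3 / 4 * (n * q))
  have hpow (i : Fin n) (x : ℤ) :
      ((‖f i x‖₊ ^ q : ℝ≥0) : ℝ≥0∞) = ((h i x : ℝ≥0∞) ^ (4 / 3 : ℝ)) ^ (n : ℝ)⁻¹ := by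
    rw [← ENNReal.rpow_mul, ← ENNReal.coe_rpow_of_nonneg _ (by positivity), ← NNReal.rpow_mul]
    congr 2
    field_simp
  calc (‖mulAvg n lam f y‖₊ : ℝ≥0∞) ^ q
      ≤ ((#(sphere n lam) : ℝ≥0)⁻¹ * ∑ x ∈ sphere n lam, ∏ i, ‖f i (y - x i)‖₊ ^ q : ℝ≥0) := by
        rw [← ENNReal.coe_rpow_of_nonneg _ hq_pos.le]
        exact_mod_cast nnnorm_mulAvg_rpow_le (card_pos.mp hS) f y hq
    _ = (#(sphere n lam) : ℝ≥0∞)⁻¹ *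
          ∑ x ∈ sphere n lam, ∏ i, ((h i (y - x i) : ℝ≥0∞) ^ (4 / 3 : ℝ)) ^ (n : ℝ)⁻¹ := by
        rw [ENNReal.coe_mul, ENNReal.coe_inv (by positivity), ENNReal.coe_natCast,
          ENNReal.ofNNReal_finsetSum]
        simp only [ENNReal.ofNNReal_finsetProd, hpow]
    _ ≤ (#(sphere n lam) : ℝ≥0∞)⁻¹ * (C * #(sphere n lam) *
          ∏ i, (localMaximal (fun x ↦ h i x) y ^ (4 / 3 : ℝ)) ^ (n : ℝ)⁻¹) := by
        gcongr
        exact hC lam hlam h y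
    _ = _ := by
        rw [mul_comm (C : ℝ≥0∞), mul_assoc, ← mul_assoc, ENNReal.inv_mul_cancel
          (by exact_mod_cast hS.ne') (ENNReal.natCast_ne_top _), one_mul]

lemma rpow_inv_tsum_rpow_anti {α : Type*} (u : α → ℝ≥0∞) {p r : ℝ} (hp : 0 < p) (hpr : p ≤ r) :
    (∑' x, u x ^ r) ^ r⁻¹ ≤ (∑' x, u x ^ p) ^ p⁻¹ := by
  have hr : 0 < r := hp.trans_le hpr
  set S := ∑' x, u x ^ p
  have hu (x : α) : u x ≤ S ^ p⁻¹ := (ENNReal.le_rpow_inv_iff hp).mpr (ENNReal.le_tsum x)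
  rw [ENNReal.rpow_inv_le_iff hr]
  calc ∑' x, u x ^ r = ∑' x, u x ^ (r - p) * u x ^ p := by
        simp only [← ENNReal.rpow_add_of_nonneg _ _ (sub_nonneg.mpr hpr) hp.le, sub_add_cancel]
    _ ≤ ∑' x, (S ^ p⁻¹) ^ (r - p) * u x ^ p := by
        gcongr with x
        exact hu x
    _ = (S ^ p⁻¹) ^ (r - p) * (S ^ p⁻¹) ^ p := by
        rw [ENNReal.tsum_mul_left, ENNReal.rpow_inv_rpow hp.ne']
    _ = (S ^ p⁻¹) ^ r := by
        rw [← ENNReal.rpow_add_of_nonneg _ _ (sub_nonneg.mpr hpr) hp.le, sub_add_cancel]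

lemma exists_tsum_maxFn_rpow_le {n : ℕ} (hn : 5 ≤ n) {q : ℝ} (hq : 1 ≤ q) :
    ∃ C : ℝ≥0, ∀ f : Fin n → ℤ → ℂ, ∑' y, maxFn n f y ^ q ≤
      C * ∏ i, (∑' y, (‖f i y‖₊ : ℝ≥0∞) ^ (n * q)) ^ (n : ℝ)⁻¹ := by
  obtain ⟨A, hA⟩ := exists_maxFn_rpow_le_localMaximal hn
  obtain ⟨B, hB⟩ := exists_tsum_localMaximal_rpow_le (p := 4 / 3) (by norm_num)
  refine ⟨A * B, fun f ↦ ?_⟩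
  have hn_ne : n ≠ 0 := by lia
  set h : Fin n → ℤ → ℝ≥0∞ := fun i x ↦ ((‖f i x‖₊ ^ (3 / 4 * (n * q)) : ℝ≥0) : ℝ≥0∞)
  have hpow (i : Fin n) (y : ℤ) : h i y ^ (4 / 3 : ℝ) = (‖f i y‖₊ : ℝ≥0∞) ^ (n * q) := by
    simp only [h]
    rw [ENNReal.coe_rpow_of_nonneg _ (by positivity), ← ENNReal.rpow_mul]
    congr 1
    ring
  calc ∑' y, maxFn n f y ^ q
      ≤ A * ∑' y, ∏ i, (localMaximal (h i) y ^ (4 / 3 : ℝ)) ^ (n : ℝ)⁻¹ := by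
        rw [← ENNReal.tsum_mul_left]
        exact ENNReal.tsum_le_tsum fun y ↦ hA q hq f y
    _ ≤ A * ∏ i, (∑' y, localMaximal (h i) y ^ (4 / 3 : ℝ)) ^ (n : ℝ)⁻¹ := by
        gcongr
        exact tsum_prod_rpow_inv_le hn_ne _
    _ ≤ A * ∏ i, (B * ∑' y, h i y ^ (4 / 3 : ℝ)) ^ (n : ℝ)⁻¹ := by
        gcongr with i
        exact hB (h i)
    _ = _ := by
        simp only [prod_const_mul_rpow_inv hn_ne, hpow, ENNReal.coe_mul, mul_assoc]

lemma exists_lqNormE_maxFn_le {n : ℕ} (hn : 5 ≤ n) {p q : ℝ} (hp : 0 < p) (hq : 1 ≤ q)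
    (hpq : p ≤ n * q) :
    ∃ C : ℝ≥0, ∀ f : Fin n → ℤ → ℂ, lqNormE q (maxFn n f) ≤ C * ∏ i, lpNorm p (f i) := by
  obtain ⟨C, hC⟩ := exists_tsum_maxFn_rpow_le hn hq
  refine ⟨C ^ q⁻¹, fun f ↦ ?_⟩
  have hq_pos : 0 < q⁻¹ := by positivity
  calc lqNormE q (maxFn n f)
      ≤ (C * ∏ i, (∑' y, (‖f i y‖₊ : ℝ≥0∞) ^ (n * q)) ^ (n : ℝ)⁻¹) ^ q⁻¹ := by
        rw [lqNormE, one_div]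
        gcongr
        exact hC f
    _ = (C ^ q⁻¹ : ℝ≥0) * ∏ i, (∑' y, (‖f i y‖₊ : ℝ≥0∞) ^ (n * q)) ^ (n * q)⁻¹ := by
        rw [ENNReal.mul_rpow_of_nonneg _ _ hq_pos.le, ENNReal.coe_rpow_of_nonneg _ hq_pos.le,
          ← ENNReal.prod_rpow_of_nonneg hq_pos.le]
        simp only [← ENNReal.rpow_mul, mul_inv]
    _ ≤ _ := by
        gcongr with i
        rw [_root_.lpNorm, one_div]
        exact rpow_inv_tsum_rpow_anti _ hp hpq

/-! ### Necessity -/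

lemma even_apply_of_mem_sphere_four_mul {m : ℕ} (hm : 2 ∣ m) {x : Fin 4 → ℤ}
    (hx : x ∈ sphere 4 (4 * m)) (i : Fin 4) : Even (x i) := by
  have hsq_emod (s : ℤ) : s ^ 2 % 8 = 1 ∧ s % 2 = 1 ∨ s ^ 2 % 4 = 0 ∧ s % 2 = 0 := by
    rcases Int.even_or_odd s with hs | hs
    · right
      exact ⟨by obtain ⟨r, rfl⟩ := hs; ring_nf; lia, Int.even_iff.mp hs⟩
    · exact .inl ⟨sq_emod_eight_of_odd hs, Int.odd_iff.mp hs⟩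
  rw [mem_sphere, Fin.sum_univ_four] at hx
  rw [Int.even_iff]
  have h0 := hsq_emod (x 0)
  have h1 := hsq_emod (x 1)
  have h2 := hsq_emod (x 2)
  have h3 := hsq_emod (x 3)
  fin_cases i <;> simp only [Fin.zero_eta, Fin.mk_one, Fin.reduceFinMk] <;> lia

lemma card_sphere_four_mul_le {m : ℕ} (hm : 2 ∣ m) :
    #(sphere 4 (4 * m)) ≤ #(sphere 4 m) := by
  refine card_le_card_of_surjOn (fun x i ↦ 2 * x i) fun x hx ↦ ?_
  choose z hz using fun i ↦ (even_apply_of_mem_sphere_four_mul hm hx i).two_dvd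
  refine ⟨z, ?_, funext fun i ↦ (hz i).symm⟩
  rw [mem_coe, mem_sphere] at hx ⊢
  simp only [hz, mul_pow, ← mul_sum] at hx
  push_cast at hx
  linarith

lemma card_sphere_four_pow_le (k : ℕ) : #(sphere 4 (4 ^ (k + 1))) ≤ #(sphere 4 4) := by
  induction k with
  | zero => rfl
  | succ k ih =>
    rw [pow_succ']
    exact (card_sphere_four_mul_le (dvd_pow (by norm_num) k.succ_ne_zero)).trans ih

lemma lpNorm_indicator_one (S : Finset ℤ) {p : ℝ} (hp : 0 < p) :
    lpNorm p ((S : Set ℤ).indicator 1) = (#S : ℝ≥0∞) ^ p⁻¹ := by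
  have hterm (x : ℤ) : (‖(S : Set ℤ).indicator (1 : ℤ → ℂ) x‖₊ : ℝ≥0∞) ^ p =
      (S : Set ℤ).indicator 1 x := by
    by_cases hx : x ∈ S <;> simp [hx, hp]
  simp only [_root_.lpNorm, hterm, one_div, ← sum_eq_tsum_indicator, Pi.one_apply, sum_const,
    nsmul_one]

lemma card_div_card_sphere_le_maxFn_indicator (n : ℕ) {lam : ℕ} (hlam : 1 ≤ lam) (S : Finset ℤ)
    (y : ℤ) :
    ((#{x ∈ sphere n lam | ∀ i, y - x i ∈ S} / #(sphere n lam) : ℝ≥0) : ℝ≥0∞) ≤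
      maxFn n (fun _ ↦ (S : Set ℤ).indicator 1) y := by
  refine le_of_eq_of_le ?_ (le_iSup₂ (f := fun (lam : ℕ) (_ : 1 ≤ lam) ↦
    (‖mulAvg n lam (fun _ ↦ (S : Set ℤ).indicator 1) y‖₊ : ℝ≥0∞)) lam hlam)
  have hprod (x : Fin n → ℤ) : ∏ i, (S : Set ℤ).indicator (1 : ℤ → ℂ) (y - x i) =
      if ∀ i, y - x i ∈ S then 1 else 0 := by
    simp only [Set.indicator_apply, mem_coe, Pi.one_apply, Fintype.prod_ite_zero, prod_const_one]
  rw [mulAvg_eq]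
  simp only [hprod, sum_boole, nnnorm_mul, nnnorm_inv, Complex.nnnorm_natCast, div_eq_inv_mul]

lemma lpNorm_single_zero_one {p : ℝ} (hp : 0 < p) : lpNorm p (Pi.single 0 1) = 1 := by
  simpa using lpNorm_indicator_one {0} hp

lemma inv_card_sphere_le_maxFn_single (k : ℕ) :
    (#(sphere 4 4) : ℝ≥0∞)⁻¹ ≤ maxFn 4 (fun _ ↦ Pi.single 0 1) (2 ^ k) := by
  set A : Finset (Fin 4 → ℤ) :=
    {x ∈ sphere 4 (4 ^ (k + 1)) | ∀ i, 2 ^ k - x i ∈ ({0} : Finset ℤ)}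
  have hmem : (fun _ ↦ 2 ^ k) ∈ A := by
    simp only [A, mem_filter, mem_sphere, sum_const, card_univ, Fintype.card_fin, sub_self,
      mem_singleton, implies_true, and_true, ← pow_mul']
    rw [pow_mul, pow_succ' 4 k]
    norm_num
  have hmax : ((#A / #(sphere 4 (4 ^ (k + 1))) : ℝ≥0) : ℝ≥0∞) ≤
      maxFn 4 (fun _ ↦ Pi.single 0 1) (2 ^ k) := by
    simpa only [coe_singleton, Set.indicator_singleton, Pi.one_apply] using
      card_div_card_sphere_le_maxFn_indicator 4 (Nat.one_le_pow _ _ four_pos) {0} (2 ^ k)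
  have hpos (lam : ℕ) : (0 : ℝ≥0) < #(sphere 4 lam) := by exact_mod_cast card_sphere_pos le_rfl lam
  refine le_trans ?_ hmax
  rw [← ENNReal.coe_natCast, ← ENNReal.coe_inv (hpos 4).ne', ENNReal.coe_le_coe, ← one_div]
  exact div_le_div₀ (by positivity) (by exact_mod_cast card_pos.mpr ⟨_, hmem⟩) (hpos _)
    (by exact_mod_cast card_sphere_four_pow_le k)

lemma lqNormE_maxFn_four_single_eq_top {q : ℝ} (hq : 0 < q) :
    lqNormE q (maxFn 4 fun _ ↦ Pi.single 0 1) = ∞ := by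
  set g := maxFn 4 fun _ ↦ Pi.single 0 1
  have hpos : (#(sphere 4 4) : ℝ≥0∞)⁻¹ ^ q ≠ 0 :=
    (ENNReal.rpow_pos (ENNReal.inv_pos.mpr (ENNReal.natCast_ne_top _))
      (ENNReal.inv_ne_top.mpr (by exact_mod_cast (card_sphere_pos le_rfl 4).ne'))).ne'
  have htsum : ∑' y, g y ^ q = ∞ := by
    rw [eq_top_iff, ← ENNReal.tsum_const_eq_top_of_ne_zero (α := ℕ) hpos]
    calc ∑' _ : ℕ, (#(sphere 4 4) : ℝ≥0∞)⁻¹ ^ q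
        ≤ ∑' k : ℕ, g (2 ^ k) ^ q := by
          gcongr with k
          exact inv_card_sphere_le_maxFn_single k
      _ ≤ ∑' y, g y ^ q := ENNReal.tsum_comp_le_tsum_of_injective
          (Int.pow_right_injective (by norm_num)) fun y ↦ g y ^ q
  rw [lqNormE, htsum, ENNReal.top_rpow_of_pos (by positivity)]

lemma not_exists_lqNormE_maxFn_four_le {p q : ℝ} (hp : 0 < p) (hq : 0 < q) :
    ¬ ∃ C : ℝ≥0, ∀ f : Fin 4 → ℤ → ℂ, (∀ i, lpNorm p (f i) ≠ ∞) →
      lqNormE q (maxFn 4 f) ≤ C * ∏ i, lpNorm p (f i) := by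
  rintro ⟨C, hC⟩
  have hsingle := hC (fun _ ↦ Pi.single 0 1) fun _ ↦ by
    simp only [lpNorm_single_zero_one hp, ne_eq, ENNReal.one_ne_top, not_false_eq_true]
  simp only [lqNormE_maxFn_four_single_eq_top hq, lpNorm_single_zero_one hp, prod_const_one,
    mul_one, top_le_iff, ENNReal.coe_ne_top] at hsingle

lemma one_le_maxFn_indicator_Icc {n : ℕ} (hn : 4 ≤ n) {M y : ℤ} (hy : y ∈ Icc (-M) M) :
    1 ≤ maxFn n (fun _ ↦ ((Icc (-(M + 1)) (M + 1) : Finset ℤ) : Set ℤ).indicator 1) y := by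
  have hmem : ∀ x ∈ sphere n 1, ∀ i, y - x i ∈ Icc (-(M + 1)) (M + 1) := by
    intro x hx i
    have hxi := apply_mem_rootInterval hx i
    simp only [rootInterval, Nat.sqrt_one, Nat.cast_one, mem_Icc] at hxi hy ⊢
    lia
  have hcard : (#(sphere n 1) : ℝ≥0) ≠ 0 := by exact_mod_cast (card_sphere_pos hn 1).ne'
  simpa only [filter_true_of_mem hmem, div_self hcard, ENNReal.coe_one] using
    card_div_card_sphere_le_maxFn_indicator n le_rfl (Icc (-(M + 1)) (M + 1)) y

lemma rpow_card_le_lqNormE {g : ℤ → ℝ≥0∞} {S : Finset ℤ} (hg : ∀ y ∈ S, 1 ≤ g y) {q : ℝ}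
    (hq : 0 < q) : (#S : ℝ≥0∞) ^ q⁻¹ ≤ lqNormE q g := by
  rw [lqNormE, one_div]
  gcongr
  calc (#S : ℝ≥0∞) = ∑ _y ∈ S, 1 := by simp
    _ ≤ ∑ y ∈ S, g y ^ q := sum_le_sum fun y hy ↦ ENNReal.one_le_rpow (hg y hy) hq
    _ ≤ ∑' y, g y ^ q := ENNReal.sum_le_tsum S

lemma le_of_forall_rpow_le_mul_rpow {a b : ℝ} (hb : 0 ≤ b) (C : ℝ)
    (h : ∀ M : ℕ, (2 * M + 1 : ℝ) ^ a ≤ C * (2 * M + 3) ^ b) : a ≤ b := by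
  by_contra! hba
  have hbounded (M : ℕ) : (2 * M + 1 : ℝ) ^ (a - b) ≤ C * 3 ^ b := by
    have hC : 0 ≤ C := by
      have h0 := h 0
      norm_num at h0
      exact nonneg_of_mul_nonneg_left (zero_le_one.trans h0) (by positivity)
    rw [Real.rpow_sub (by positivity), div_le_iff₀ (by positivity), mul_assoc,
      ← Real.mul_rpow (by positivity) (by positivity)]
    refine (h M).trans ?_
    gcongr
    linarith
  have hlim : Filter.Tendsto (fun M : ℕ ↦ (2 * M + 1 : ℝ) ^ (a - b)) Filter.atTop Filter.atTop :=
    (tendsto_rpow_atTop (sub_pos.mpr hba)).comp (Filter.tendsto_atTop_add_const_right _ _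
      (tendsto_natCast_atTop_atTop.const_mul_atTop two_pos))
  exact Filter.not_bddAbove_of_tendsto_atTop hlim ⟨_, Set.forall_mem_range.mpr hbounded⟩

lemma le_mul_of_exists_lqNormE_maxFn_le {n : ℕ} (hn : 4 ≤ n) {p q : ℝ} (hp : 0 < p) (hq : 0 < q)
    (h : ∃ C : ℝ≥0, ∀ f : Fin n → ℤ → ℂ, (∀ i, lpNorm p (f i) ≠ ∞) →
      lqNormE q (maxFn n f) ≤ C * ∏ i, lpNorm p (f i)) : p ≤ n * q := by
  obtain ⟨C, hC⟩ := h
  suffices q⁻¹ ≤ n * p⁻¹ by field_simp at this; linarith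
  refine le_of_forall_rpow_le_mul_rpow (by positivity) C fun M ↦ ?_
  have hcard (N : ℕ) : #(Icc (-N : ℤ) N) = 2 * N + 1 := by rw [Int.card_Icc]; lia
  set S : Finset ℤ := Icc (-(M + 1)) (M + 1)
  have hS : #S = 2 * M + 3 := by simp only [S, Int.card_Icc]; lia
  have hbound := (rpow_card_le_lqNormE (S := Icc (-M : ℤ) M)
    (fun y ↦ one_le_maxFn_indicator_Icc hn) hq).trans
    (hC (fun _ ↦ (S : Set ℤ).indicator 1) fun _ ↦ by
      rw [lpNorm_indicator_one S hp]; finiteness)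
  simp only [lpNorm_indicator_one S hp, prod_const, card_univ, Fintype.card_fin, hcard, hS,
    ← ENNReal.rpow_mul_natCast, mul_comm p⁻¹] at hbound
  rw [← ENNReal.coe_natCast, ← ENNReal.coe_natCast,
    ← ENNReal.coe_rpow_of_nonneg _ (by positivity),
    ← ENNReal.coe_rpow_of_nonneg _ (by positivity)] at hbound
  exact_mod_cast hbound

end SphericalMaximal

open SphericalMaximal

theorem statement0_general (n : ℕ) (hn : 4 ≤ n) (p q : ℝ) (hp : 0 < p) (hq : 1 ≤ q) :
    (∃ C : ℝ≥0, ∀ f : Fin n → ℤ → ℂ, (∀ i, lpNorm p (f i) ≠ ∞) →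
      lqNormE q (maxFn n f) ≤ (C : ℝ≥0∞) * ∏ i, lpNorm p (f i)) ↔
    (5 ≤ n ∧ p ≤ n * q) := by
  have hq_pos : 0 < q := zero_lt_one.trans_le hq
  refine ⟨fun hbounded ↦ ⟨?_, le_mul_of_exists_lqNormE_maxFn_le hn hp hq_pos hbounded⟩,
    fun ⟨hn_five, hpq⟩ ↦ ?_⟩
  · refine lt_of_le_of_ne hn ?_
    rintro rfl
    exact not_exists_lqNormE_maxFn_four_le hp hq_pos hbounded
  · obtain ⟨C, hC⟩ := exists_lqNormE_maxFn_le hn_five hp hq hpq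
    exact ⟨C, fun f _ ↦ hC f⟩

/-- For `n ≥ 4`, `1 ≤ q < ∞`, `1 ≤ p < ∞`, the maximal operator `A_*`
maps `ℓ^p × ⋯ × ℓ^p → ℓ^q` boundedly if and only if `n ≥ 5` and `p ≤ n q`. -/
theorem statement0 (n : ℕ) (hn : 4 ≤ n) (p q : ℝ) (hp : 1 ≤ p) (hq : 1 ≤ q) :
    (∃ C : ℝ≥0, ∀ f : Fin n → ℤ → ℂ, (∀ i, lpNorm p (f i) ≠ ∞) →
      lqNormE q (maxFn n f) ≤ (C : ℝ≥0∞) * ∏ i, lpNorm p (f i)) ↔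
    (5 ≤ n ∧ p ≤ n * q) :=
  statement0_general n hn p q (zero_lt_one.trans_le hp) hq
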